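/- Nondegeneracy on Kirchhoff stream functions, I (Fourier characterization). Fix ξ > 0 and define Ψ^ξ : ℝ² → ℝ by Ψ^ξ(x) = (1/2π)∫_{E^ξ} log‖x−y‖ dy − Ω^ξ‖x‖²/2. Let φ : Σ^ξ → ℝ be continuous with 2-fold dihedral symmetry, i.e. φ(x₁,x₂) = φ(x₁,−x₂) = φ(−x₁,−x₂) for all (x₁,x₂) ∈ Σ^ξ; define ρ : ℝ → ℝ by ρ(η) = φ(cos η, tanh(ξ) sin η) and its Fourier coefficients ρ̂(k) = (1/2π)∫₀^{2π} ρ(η) e^{−ikη} dη for k ∈ ℤ. Then the following are equivalent: (i) for all x ∈ Σ^ξ, φ(x) + ∫_{Σ^ξ} (1/2π) log‖x−y‖ · (φ(y)/‖∇Ψ^ξ(y)‖) dℋ¹(y) = 0; (ii) (sinh(2ξ) − 2e^{2ξ} log(1+e^{−2ξ}))·ρ̂(0) = 0, and (|k| sinh(2ξ) − e^{2ξ}(1+e^{−2ξ|k|}))·ρ̂(k) = 0 for every k ∈ ℤ ∖ {0}. -/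

import Mathlib

open MeasureTheory Real

noncomputable section

/-- The Euclidean plane. -/
abbrev Pt := EuclideanSpace ℝ (Fin 2)

/-- The point of the plane with the given coordinates. -/
def pt (a b : ℝ) : Pt := (WithLp.equiv 2 (Fin 2 → ℝ)).symm ![a, b]

/-- The open ellipse `E^ξ = {x : x₁² + (x₂ / tanh ξ)² < 1}`. -/
def Eell (ξ : ℝ) : Set Pt := {x : Pt | (x 0) ^ 2 + (x 1 / Real.tanh ξ) ^ 2 < 1}

/-- The angular velocity `Ω^ξ = tanh ξ / (1 + tanh ξ)²` of the `ξ`-Kirchhoff vortex. -/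
def Ωell (ξ : ℝ) : ℝ := Real.tanh ξ / (1 + Real.tanh ξ) ^ 2

/-- The elliptical coordinates map
`(ζ, η) ↦ (sech ξ · cosh ζ · cos η, sech ξ · sinh ζ · sin η)`. -/
def ept (ξ ζ η : ℝ) : Pt :=
  pt ((Real.cosh ξ)⁻¹ * Real.cosh ζ * Real.cos η)
    ((Real.cosh ξ)⁻¹ * Real.sinh ζ * Real.sin η)

/-- The relative stream function of the `ξ`-Kirchhoff vortex (without the
additive normalization constant). -/
def Ψell (ξ : ℝ) (x : Pt) : ℝ :=
  (1 / (2 * π)) * (∫ y in Eell ξ, Real.log ‖x - y‖) - Ωell ξ * ‖x‖ ^ 2 / 2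


/-- Pointwise Taylor estimate for the logarithmic kernel. -/
lemma kv_log_bound (a b h : ℂ) (hb : b = a + h) (ha0 : a ≠ 0) (hb0 : b ≠ 0) :
    |Real.log ‖b‖ - Real.log ‖a‖ - (h / a).re| ≤
      4 * ((‖h‖ / ‖a‖) ^ (3 / 2 : ℝ) + (‖h‖ / ‖b‖) ^ (3 / 2 : ℝ)) := by
  have hna : 0 < ‖a‖ := norm_pos_iff.2 ha0
  have hnb : 0 < ‖b‖ := norm_pos_iff.2 hb0
  set X := ‖h‖ / ‖a‖ with hX
  set Y := ‖h‖ / ‖b‖ with hY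
  have hX0 : 0 ≤ X := by positivity
  have hY0 : 0 ≤ Y := by positivity
  have hre : |(h / a).re| ≤ X := by
    refine (Complex.abs_re_le_norm _).trans ?_
    rw [norm_div]
  have hYp : 0 ≤ Y ^ (3 / 2 : ℝ) := by positivity
  have key : ∀ r : ℝ, 1 / 4 ≤ r → r ≤ 2 * r ^ (3 / 2 : ℝ) := by
    intro r hr
    have h0 : 0 < r := by linarith
    have : r ^ (3 / 2 : ℝ) = r * Real.sqrt r := by
      rw [Real.sqrt_eq_rpow]
      nth_rewrite 2 [← Real.rpow_one r]
      rw [← Real.rpow_add h0]; norm_num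
    have h2 : 1 / 2 ≤ Real.sqrt r := by
      apply Real.le_sqrt_of_sq_le; norm_num; linarith
    rw [this]; nlinarith
  rcases le_or_gt X (1 / 2) with hc | hc
  · have hb1 : b = a * (1 + h / a) := by rw [hb]; field_simp
    have h1 : 1 + h / a ≠ 0 := by
      intro h0; rw [h0, mul_zero] at hb1; exact hb0 hb1
    have e1 : Real.log ‖b‖ - Real.log ‖a‖ = (Complex.log (1 + h / a)).re := by
      rw [Complex.log_re, hb1, norm_mul, Real.log_mul hna.ne' (norm_ne_zero_iff.2 h1)]; ring
    rw [e1, ← Complex.sub_re]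
    refine (Complex.abs_re_le_norm _).trans ?_
    have hn : ‖h / a‖ = X := by rw [norm_div]
    refine (Complex.norm_log_one_add_sub_self_le (by rw [hn]; linarith)).trans ?_
    rw [hn]
    have h3 : (1 - X)⁻¹ ≤ 2 := by
      rw [inv_le_comm₀ (by linarith) (by norm_num)]; linarith
    have h4 : X ^ 2 ≤ X ^ (3 / 2 : ℝ) := by
      rcases hX0.eq_or_lt with h0 | h0
      · rw [← h0]; norm_num
      · rw [← Real.rpow_natCast]
        exact Real.rpow_le_rpow_of_exponent_ge h0 (by linarith) (by norm_num)
    have : X ^ 2 * (1 - X)⁻¹ ≤ X ^ 2 * 2 := by gcongr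
    have : 0 ≤ X ^ (3 / 2 : ℝ) := by positivity
    linarith
  · have hX2 := key X (by linarith)
    have hah : ‖a‖ < 2 * ‖h‖ := by
      rw [hX, lt_div_iff₀ hna] at hc; linarith
    have hbh : ‖b‖ ≤ ‖a‖ + ‖h‖ := by rw [hb]; exact norm_add_le _ _
    have hab : ‖a‖ ≤ ‖b‖ + ‖h‖ := by
      have : a = b - h := by rw [hb]; ring
      rw [this]; exact norm_sub_le _ _
    have hY2 := key Y (by rw [hY, le_div_iff₀ hnb]; linarith)
    have l1 : Real.log ‖b‖ - Real.log ‖a‖ ≤ X := by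
      rw [← Real.log_div hnb.ne' hna.ne']
      refine (Real.log_le_sub_one_of_pos (by positivity)).trans ?_
      rw [hX, div_sub_one hna.ne']; gcongr; linarith
    have l2 : Real.log ‖a‖ - Real.log ‖b‖ ≤ Y := by
      rw [← Real.log_div hna.ne' hnb.ne']
      refine (Real.log_le_sub_one_of_pos (by positivity)).trans ?_
      rw [hY, div_sub_one hnb.ne']; gcongr; linarith
    rw [abs_le] at hre ⊢
    constructor <;> linarith [hre.1, hre.2]

/-- The weight `‖w‖^(-3/2)`. -/
def kvg (w : ℂ) : ℝ := ‖w‖ ^ (-(3 / 2) : ℝ)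

lemma kvg_nonneg (w : ℂ) : 0 ≤ kvg w := by unfold kvg; positivity

lemma kvg_meas : Measurable kvg := by unfold kvg; fun_prop

lemma kvg_ball : Integrable (fun w : ℂ => (Set.Iio (1:ℝ)).indicator (fun r => r ^ (-(3 / 2) : ℝ)) ‖w‖) := by
  have := (integrable_fun_norm_addHaar (volume : Measure ℂ)
    (f := (Set.Iio (1:ℝ)).indicator (fun r => r ^ (-(3 / 2) : ℝ)))).2
  apply this
  simp only [Complex.finrank_real_complex]
  have h1 : IntegrableOn (fun y : ℝ => y ^ (-(1 / 2) : ℝ)) (Set.Ioo 0 1) := by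
    have := (intervalIntegral.intervalIntegrable_rpow' (a := 0) (b := 1) (r := -(1/2)) (by norm_num))
    rw [intervalIntegrable_iff_integrableOn_Ioo_of_le (by norm_num)] at this
    exact this
  have h2 : IntegrableOn (fun y : ℝ => (Set.Iio (1:ℝ)).indicator (fun y => y ^ (-(1 / 2) : ℝ)) y) (Set.Ioi 0) := by
    rw [IntegrableOn, integrable_indicator_iff measurableSet_Iio, IntegrableOn,
      Measure.restrict_restrict measurableSet_Iio, Set.inter_comm, Set.Ioi_inter_Iio]
    exact h1
  refine h2.congr_fun (fun y hy => ?_) measurableSet_Ioi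
  have hy0 : 0 < y := hy
  by_cases h : y ∈ Set.Iio (1:ℝ)
  · simp only [Set.indicator_of_mem h, smul_eq_mul]
    rw [← Real.rpow_natCast, ← Real.rpow_add hy0]; norm_num
  · simp [Set.indicator_of_notMem h]

/-- Uniform bound for the weight on a set of finite measure. -/
lemma kvg_unif (D : Set ℂ) (hD : volume D ≠ ⊤) : ∃ M : ℝ, ∀ z : ℂ,
    IntegrableOn (fun w => kvg (z - w)) D ∧ ∫ w in D, kvg (z - w) ≤ M := by
  set G : ℂ → ℝ := fun w => (Set.Iio (1:ℝ)).indicator (fun r => r ^ (-(3 / 2) : ℝ)) ‖w‖ with hG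
  have hGi : Integrable G := kvg_ball
  have hG0 : ∀ w, 0 ≤ G w := by
    intro w
    by_cases h : ‖w‖ ∈ Set.Iio (1:ℝ)
    · simp only [hG, Set.indicator_of_mem h]; positivity
    · simp only [hG, Set.indicator_of_notMem h]; exact le_rfl
  have hle : ∀ w, kvg w ≤ G w + 1 := by
    intro w
    by_cases h : ‖w‖ ∈ Set.Iio (1:ℝ)
    · simp only [hG, Set.indicator_of_mem h, kvg]; linarith
    · simp only [hG, Set.indicator_of_notMem h, kvg]
      have : 1 ≤ ‖w‖ := by simpa using h
      rw [zero_add]; exact Real.rpow_le_one_of_one_le_of_nonpos this (by norm_num)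
  have hconst : IntegrableOn (fun _ : ℂ => (1:ℝ)) D := integrableOn_const hD
  refine ⟨(∫ w, G w) + ∫ w in D, (1:ℝ), fun z => ?_⟩
  have hGz : Integrable (fun w => G (z - w)) := hGi.comp_sub_left z
  have hinteg : IntegrableOn (fun w => kvg (z - w)) D := by
    refine Integrable.mono' (hGz.integrableOn.add hconst) ?_ ?_
    · exact (kvg_meas.comp (by fun_prop)).aestronglyMeasurable
    · refine Filter.Eventually.of_forall fun w => ?_
      rw [Real.norm_eq_abs, abs_of_nonneg (kvg_nonneg _)]
      exact hle _
  refine ⟨hinteg, ?_⟩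
  calc ∫ w in D, kvg (z - w) ≤ ∫ w in D, (G (z - w) + 1) :=
        integral_mono hinteg (hGz.integrableOn.add hconst) (fun w => hle _)
    _ = (∫ w in D, G (z - w)) + ∫ w in D, (1:ℝ) := integral_add hGz.integrableOn hconst
    _ ≤ (∫ w, G (z - w)) + ∫ w in D, (1:ℝ) := by
        gcongr
        · exact Filter.Eventually.of_forall fun w => hG0 _
        · exact Measure.restrict_le_self
    _ = _ := by rw [integral_sub_left_eq_self G volume z]

lemma kv_log_le (r : ℝ) (hr : 0 ≤ r) : |Real.log r| ≤ r ^ (-(3 / 2) : ℝ) + r := by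
  rcases hr.eq_or_lt with h | h
  · rw [← h]; norm_num
  · have h1 := Real.log_le_sub_one_of_pos h
    have h2 := Real.log_le_sub_one_of_pos (show 0 < r ^ (-(3 / 2) : ℝ) by positivity)
    rw [Real.log_rpow h] at h2
    have h3 : 0 < r ^ (-(3 / 2) : ℝ) := by positivity
    rw [abs_le]; constructor <;> nlinarith

lemma kv_inv_le (r : ℝ) (hr : 0 ≤ r) : r⁻¹ ≤ r ^ (-(3 / 2) : ℝ) + 1 := by
  rcases hr.eq_or_lt with h | h
  · rw [← h]; norm_num
  · rcases le_or_gt r 1 with h1 | h1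
    · have : r⁻¹ ≤ r ^ (-(3 / 2) : ℝ) := by
        rw [← Real.rpow_neg_one]
        exact Real.rpow_le_rpow_of_exponent_ge h h1 (by norm_num)
      linarith
    · have h3 : 0 < r ^ (-(3 / 2) : ℝ) := by positivity
      have : r⁻¹ ≤ 1 := inv_le_one_of_one_le₀ h1.le
      linarith

lemma kv_log_int (D : Set ℂ) (hDm : MeasurableSet D) (hDb : Bornology.IsBounded D) (z : ℂ) :
    IntegrableOn (fun w => Real.log ‖z - w‖) D := by
  have hD : volume D ≠ ⊤ := hDb.measure_lt_top.ne
  obtain ⟨M, hM⟩ := kvg_unif D hD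
  obtain ⟨R, hR⟩ := hDb.exists_norm_le
  have hconst : IntegrableOn (fun _ : ℂ => (‖z‖ + R)) D := integrableOn_const hD
  refine Integrable.mono' ((hM z).1.add hconst) ?_ ?_
  · exact Measurable.aestronglyMeasurable (by fun_prop)
  · filter_upwards [ae_restrict_mem hDm] with w hw
    refine (kv_log_le _ (norm_nonneg _)).trans ?_
    simp only [kvg, Pi.add_apply]
    gcongr
    exact (norm_sub_le _ _).trans (by linarith [hR w hw])

lemma kv_inv_int (D : Set ℂ) (hDb : Bornology.IsBounded D) (z : ℂ) :
    IntegrableOn (fun w => (z - w)⁻¹) D := by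
  have hD : volume D ≠ ⊤ := hDb.measure_lt_top.ne
  obtain ⟨M, hM⟩ := kvg_unif D hD
  have hconst : IntegrableOn (fun _ : ℂ => (1:ℝ)) D := integrableOn_const hD
  refine Integrable.mono' ((hM z).1.add hconst) ?_ ?_
  · exact Measurable.aestronglyMeasurable (by fun_prop)
  · refine Filter.Eventually.of_forall fun w => ?_
    rw [norm_inv]
    exact kv_inv_le _ (norm_nonneg _)

/-- Remainder estimate for the logarithmic potential. -/
lemma kv_remainder (D : Set ℂ) (hDm : MeasurableSet D) (hDb : Bornology.IsBounded D) :
    ∃ M : ℝ, ∀ z h : ℂ,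
      |(∫ w in D, Real.log ‖z + h - w‖) - (∫ w in D, Real.log ‖z - w‖)
        - (h * ∫ w in D, (z - w)⁻¹).re| ≤ M * ‖h‖ ^ (3 / 2 : ℝ) := by
  have hD : volume D ≠ ⊤ := hDb.measure_lt_top.ne
  obtain ⟨M, hM⟩ := kvg_unif D hD
  refine ⟨8 * M, fun z h => ?_⟩
  have i1 := kv_log_int D hDm hDb (z + h)
  have i2 := kv_log_int D hDm hDb z
  have i3 := (kv_inv_int D hDb z).const_mul h
  have i3r : IntegrableOn (fun w => (h * (z - w)⁻¹).re) D := i3.re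
  have e3 : (h * ∫ w in D, (z - w)⁻¹).re = ∫ w in D, (h * (z - w)⁻¹).re := by
    rw [← integral_const_mul]
    exact (integral_re i3).symm
  have i12 : IntegrableOn (fun w => Real.log ‖z + h - w‖ - Real.log ‖z - w‖) D := i1.sub i2
  rw [e3, ← integral_sub i1 i2, ← integral_sub i12 i3r, ← Real.norm_eq_abs]
  have hb : IntegrableOn (fun w => 4 * ‖h‖ ^ (3 / 2 : ℝ) * (kvg (z - w) + kvg (z + h - w))) D :=
    ((hM z).1.add (hM (z + h)).1).const_mul _
  have ne : ∀ c : ℂ, ∀ᵐ w ∂(volume.restrict D), w ≠ c := fun c =>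
    ae_restrict_of_ae (by simp [ae_iff])
  refine (norm_integral_le_of_norm_le hb ?_).trans ?_
  · filter_upwards [ne z, ne (z + h)] with w h1 h2
    rw [Real.norm_eq_abs]
    have := kv_log_bound (z - w) (z + h - w) h (by ring) (sub_ne_zero.2 h1.symm) (sub_ne_zero.2 h2.symm)
    rw [div_eq_mul_inv] at this
    refine this.trans (le_of_eq ?_)
    rw [Real.div_rpow (norm_nonneg _) (norm_nonneg _), Real.div_rpow (norm_nonneg _) (norm_nonneg _)]
    simp only [kvg, Real.rpow_neg (norm_nonneg _)]
    ring
  · rw [integral_const_mul, integral_add (hM z).1 (hM (z + h)).1]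
    have : 0 ≤ ‖h‖ ^ (3 / 2 : ℝ) := by positivity
    nlinarith [(hM z).2, (hM (z+h)).2]

/-- The real linear functional `h ↦ Re (c h)`. -/
def kvL (c : ℂ) : ℂ →L[ℝ] ℝ := Complex.reCLM.comp ((ContinuousLinearMap.mul ℝ ℂ) c)

lemma kvL_apply (c h : ℂ) : kvL c h = (c * h).re := rfl

/-- The logarithmic potential of a bounded set is differentiable everywhere. -/
lemma kv_hasFDeriv (D : Set ℂ) (hDm : MeasurableSet D) (hDb : Bornology.IsBounded D) (z : ℂ) :
    HasFDerivAt (fun z => ∫ w in D, Real.log ‖z - w‖) (kvL (∫ w in D, (z - w)⁻¹)) z := by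
  obtain ⟨M, hM⟩ := kv_remainder D hDm hDb
  rw [hasFDerivAt_iff_isLittleO_nhds_zero]
  have h1 : (fun h : ℂ => (∫ w in D, Real.log ‖z + h - w‖) - (∫ w in D, Real.log ‖z - w‖)
        - kvL (∫ w in D, (z - w)⁻¹) h) =O[nhds 0] (fun h : ℂ => ‖h‖ ^ (3 / 2 : ℝ)) := by
    refine Asymptotics.IsBigO.of_bound M (Filter.Eventually.of_forall fun h => ?_)
    rw [kvL_apply, mul_comm, Real.norm_eq_abs, Real.norm_eq_abs,
      abs_of_nonneg (show 0 ≤ ‖h‖ ^ (3 / 2 : ℝ) by positivity)]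
    exact hM z h
  refine h1.trans_isLittleO ?_
  rw [← Asymptotics.isLittleO_norm_right, Asymptotics.isLittleO_iff_tendsto]
  · have h2 : ∀ h : ℂ, ‖h‖ ^ (3 / 2 : ℝ) / ‖h‖ = ‖h‖ ^ (1 / 2 : ℝ) := by
      intro h
      rcases (norm_nonneg h).eq_or_lt with h0 | h0
      · rw [← h0]; norm_num
      · nth_rewrite 2 [← Real.rpow_one ‖h‖]
        rw [← Real.rpow_sub h0]; norm_num
    simp_rw [h2]
    have : ContinuousAt (fun h : ℂ => ‖h‖ ^ (1 / 2 : ℝ)) 0 :=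
      ContinuousAt.rpow_const continuous_norm.continuousAt (Or.inr (by norm_num))
    simpa [ContinuousAt] using this
  · intro x hx
    rw [hx]; norm_num

lemma kvQ_pos (t : ℝ) (ht : 0 < t) (θ : ℝ) : 0 < t ^ 2 * cos θ ^ 2 + sin θ ^ 2 := by
  have h := Real.sin_sq_add_cos_sq θ
  by_cases h0 : cos θ = 0
  · rw [h0] at h ⊢; nlinarith
  · positivity

/-- The Poisson integral in elliptic form. -/
lemma kv_poisson (t : ℝ) (ht : 0 < t) (ht1 : t < 1) :
    ∫ θ in (0:ℝ)..(2 * π), 1 / (t ^ 2 * cos θ ^ 2 + sin θ ^ 2) = 2 * π / t := by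
  set q : ℝ := (1 - t) / (1 + t) with hq
  have hq0 : 0 < q := div_pos (by linarith) (by linarith)
  have hq1 : q < 1 := by rw [hq, div_lt_one (by linarith)]; linarith
  set f : ℂ → ℂ := fun z => (1 + q * z ^ 2) / (1 - q * z ^ 2) with hf
  have hne : ∀ z : ℂ, ‖z‖ ≤ 1 → (1 - q * z ^ 2 : ℂ) ≠ 0 := by
    intro z hz h0
    have h1 : (q * z ^ 2 : ℂ) = 1 := (sub_eq_zero.1 h0).symm
    have h2 : ‖(q * z ^ 2 : ℂ)‖ = q * ‖z‖ ^ 2 := by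
      rw [norm_mul, norm_pow, Complex.norm_real, Real.norm_eq_abs, abs_of_pos hq0]
    rw [h1, norm_one] at h2
    have : ‖z‖ ^ 2 ≤ 1 := pow_le_one₀ (norm_nonneg _) hz
    nlinarith
  have hd : DifferentiableOn ℂ f (Metric.closedBall 0 1) := by
    intro z hz
    apply DifferentiableAt.differentiableWithinAt
    have := hne z (by simpa using hz)
    simp only [hf]
    fun_prop (disch := assumption)
  have hdc : DiffContOnCl ℂ f (Metric.ball 0 |1|) := by
    rw [abs_one]; apply DifferentiableOn.diffContOnCl
    rwa [closure_ball _ one_ne_zero]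
  have h1 := circleAverage_of_differentiable_on hdc
  rw [Real.circleAverage] at h1
  have hf0 : f 0 = 1 := by simp [hf]
  rw [hf0] at h1
  have hcont : Continuous (fun θ => f (circleMap 0 1 θ)) := by
    rw [continuous_iff_continuousAt]
    intro θ
    have hm : circleMap 0 1 θ ∈ Metric.closedBall (0:ℂ) 1 := by simp
    have h2 : ContinuousAt f (circleMap 0 1 θ) := by
      have := hne (circleMap 0 1 θ) (by simp)
      simp only [hf]; fun_prop (disch := assumption)
    exact ContinuousAt.comp h2 (continuous_circleMap 0 1).continuousAt
  have h2 : ∫ θ in (0:ℝ)..(2 * π), f (circleMap 0 1 θ) = 2 * π := by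
    have hpi : (2 * π : ℝ) ≠ 0 := by positivity
    rw [inv_smul_eq_iff₀ hpi] at h1
    rw [h1]; simp
  have h3 : ∫ θ in (0:ℝ)..(2 * π), (f (circleMap 0 1 θ)).re = 2 * π := by
    have := Complex.reCLM.intervalIntegral_comp_comm (hcont.intervalIntegrable (μ := volume) 0 (2 * π))
    simp only [Complex.reCLM_apply] at this
    rw [this, h2]; simp
  have h4 : ∀ θ : ℝ, (f (circleMap 0 1 θ)).re = t * (1 / (t ^ 2 * cos θ ^ 2 + sin θ ^ 2)) := by
    intro θ
    have hQ := kvQ_pos t ht θ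
    have hsc := Real.sin_sq_add_cos_sq θ
    have hz : circleMap 0 1 θ ^ 2 = ((cos θ ^ 2 - sin θ ^ 2 : ℝ) : ℂ) + ((2 * sin θ * cos θ : ℝ) : ℂ) * Complex.I := by
      rw [circleMap, zero_add, Complex.ofReal_one, one_mul, Complex.exp_mul_I]
      push_cast
      linear_combination (Complex.sin θ)^2 * Complex.I_sq
    have e1 : (1 + q * circleMap 0 1 θ ^ 2 : ℂ) = ⟨1 + q * (cos θ ^ 2 - sin θ ^ 2), q * (2 * sin θ * cos θ)⟩ := by
      rw [hz]
      generalize cos θ ^ 2 - sin θ ^ 2 = X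
      generalize 2 * sin θ * cos θ = Y
      apply Complex.ext <;> simp
    have e2 : (1 - q * circleMap 0 1 θ ^ 2 : ℂ) = ⟨1 - q * (cos θ ^ 2 - sin θ ^ 2), -(q * (2 * sin θ * cos θ))⟩ := by
      rw [hz]
      generalize cos θ ^ 2 - sin θ ^ 2 = X
      generalize 2 * sin θ * cos θ = Y
      apply Complex.ext <;> simp
    simp only [hf]
    rw [e1, e2, Complex.div_re, Complex.normSq_mk]
    have hN : (1 - q * (cos θ ^ 2 - sin θ ^ 2)) * (1 - q * (cos θ ^ 2 - sin θ ^ 2)) +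
        -(q * (2 * sin θ * cos θ)) * -(q * (2 * sin θ * cos θ)) = (1 + q) ^ 2 * (t ^ 2 * cos θ ^ 2 + sin θ ^ 2) := by
      have hqt : (1 + q) * t = 1 - q := by rw [hq]; field_simp; ring
      have : (1 + q) ^ 2 * (t ^ 2 * cos θ ^ 2 + sin θ ^ 2) = (1 - q) ^ 2 * cos θ ^ 2 + (1 + q) ^ 2 * sin θ ^ 2 := by
        rw [← hqt]; ring
      rw [this]
      have hs : sin θ ^ 2 = 1 - cos θ ^ 2 := by linarith
      have : (q * (2 * sin θ * cos θ)) * (q * (2 * sin θ * cos θ)) = 4 * q ^ 2 * sin θ ^ 2 * cos θ ^ 2 := by ring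
      rw [neg_mul_neg, this, hs]; ring
    rw [hN, ← add_div]
    have hqt : 1 - q ^ 2 = (1 + q) ^ 2 * t := by rw [hq]; field_simp; ring
    have hnum : (1 + q * (cos θ ^ 2 - sin θ ^ 2)) * (1 - q * (cos θ ^ 2 - sin θ ^ 2)) +
        (q * (2 * sin θ * cos θ)) * -(q * (2 * sin θ * cos θ)) = (1 + q) ^ 2 * t := by
      rw [← hqt]
      have hs : sin θ ^ 2 = 1 - cos θ ^ 2 := by linarith
      have : (q * (2 * sin θ * cos θ)) * -(q * (2 * sin θ * cos θ)) = -(4 * q ^ 2 * sin θ ^ 2 * cos θ ^ 2) := by ring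
      rw [this, hs]; ring
    rw [hnum]
    have : 0 < 1 + q := by linarith
    field_simp
  simp_rw [h4] at h3
  rw [intervalIntegral.integral_const_mul] at h3
  rw [eq_div_iff ht.ne']; linarith

lemma kv_poisson' (t : ℝ) (ht : 0 < t) (ht1 : t < 1) :
    ∫ θ in (-π)..π, 1 / (t ^ 2 * cos θ ^ 2 + sin θ ^ 2) = 2 * π / t := by
  have hp : Function.Periodic (fun θ => 1 / (t ^ 2 * cos θ ^ 2 + sin θ ^ 2)) (2 * π) := by
    intro θ; simp
  have := hp.intervalIntegral_add_eq (-π) 0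
  rw [zero_add, kv_poisson t ht ht1] at this
  rw [← this]; congr 1; ring

lemma kvQ_cont (t : ℝ) (ht : 0 < t) (g : ℝ → ℝ) (hg : Continuous g) :
    Continuous (fun θ => g θ / (t ^ 2 * cos θ ^ 2 + sin θ ^ 2)) :=
  hg.div (by fun_prop) (fun θ => (kvQ_pos t ht θ).ne')

lemma kv_cos2 (t : ℝ) (ht : 0 < t) (ht1 : t < 1) :
    ∫ θ in (-π)..π, cos θ ^ 2 / (t ^ 2 * cos θ ^ 2 + sin θ ^ 2) = 2 * π / (t * (1 + t)) ∧
    ∫ θ in (-π)..π, sin θ ^ 2 / (t ^ 2 * cos θ ^ 2 + sin θ ^ 2) = 2 * π / (1 + t) := by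
  have c1 := (kvQ_cont t ht (fun θ => cos θ ^ 2) (by fun_prop)).intervalIntegrable (μ := volume) (-π) π
  have c2 := (kvQ_cont t ht (fun θ => sin θ ^ 2) (by fun_prop)).intervalIntegrable (μ := volume) (-π) π
  have s1 := intervalIntegral.integral_add c1 c2
  have s2 := intervalIntegral.integral_add (c1.const_mul (t ^ 2)) c2
  have e1 : ∀ θ, cos θ ^ 2 / (t ^ 2 * cos θ ^ 2 + sin θ ^ 2) + sin θ ^ 2 / (t ^ 2 * cos θ ^ 2 + sin θ ^ 2)
      = 1 / (t ^ 2 * cos θ ^ 2 + sin θ ^ 2) := by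
    intro θ; rw [← add_div, Real.cos_sq_add_sin_sq]
  have e2 : ∀ θ, t ^ 2 * (cos θ ^ 2 / (t ^ 2 * cos θ ^ 2 + sin θ ^ 2)) + sin θ ^ 2 / (t ^ 2 * cos θ ^ 2 + sin θ ^ 2)
      = 1 := by
    intro θ; rw [← mul_div_assoc, ← add_div, div_self (kvQ_pos t ht θ).ne']
  simp_rw [e1] at s1
  simp_rw [e2] at s2
  rw [kv_poisson' t ht ht1] at s1
  rw [intervalIntegral.integral_const_mul] at s2
  simp only [intervalIntegral.integral_const, smul_eq_mul, mul_one] at s2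
  set A := ∫ θ in (-π)..π, cos θ ^ 2 / (t ^ 2 * cos θ ^ 2 + sin θ ^ 2)
  set B := ∫ θ in (-π)..π, sin θ ^ 2 / (t ^ 2 * cos θ ^ 2 + sin θ ^ 2)
  have hB : B = 2 * π / t - A := by linarith
  have h1 : 1 - t ≠ 0 := by linarith
  have h2 : 1 + t ≠ 0 := by linarith
  have hA : A = 2 * π / (t * (1 + t)) := by
    have : (1 - t ^ 2) * A = 2 * π / t - 2 * π := by linarith
    have h3 : (1 - t ^ 2) ≠ 0 := by nlinarith
    rw [← mul_right_inj' h3, this]; field_simp; ring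
  refine ⟨hA, ?_⟩
  rw [hB, hA]; field_simp; ring

lemma kv_cross (t : ℝ) :
    ∫ θ in (-π)..π, (cos θ * sin θ) / (t ^ 2 * cos θ ^ 2 + sin θ ^ 2) = 0 := by
  have h := intervalIntegral.integral_comp_neg (a := -π) (b := π)
    (fun θ => (cos θ * sin θ) / (t ^ 2 * cos θ ^ 2 + sin θ ^ 2))
  simp only [cos_neg, sin_neg, neg_neg, mul_neg, neg_sq, neg_div, intervalIntegral.integral_neg] at h
  linarith

/-- The ellipse in the complex plane. -/
def kvD (t : ℝ) : Set ℂ := {w | w.re ^ 2 + (w.im / t) ^ 2 < 1}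

/-- Signed chord length. -/
def kvl (t x y θ : ℝ) : ℝ := -2 * (t ^ 2 * x * cos θ + y * sin θ) / (t ^ 2 * cos θ ^ 2 + sin θ ^ 2)

lemma kvl_cont (t x y : ℝ) (ht : 0 < t) : Continuous (kvl t x y) :=
  kvQ_cont t ht (fun θ => -2 * (t ^ 2 * x * cos θ + y * sin θ)) (by fun_prop)

lemma kvD_meas (t : ℝ) : MeasurableSet (kvD t) := by
  unfold kvD
  exact measurableSet_lt (by fun_prop) (by fun_prop)

lemma kvD_bdd (t : ℝ) (ht : 0 < t) (ht1 : t < 1) : Bornology.IsBounded (kvD t) := by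
  rw [isBounded_iff_forall_norm_le]
  refine ⟨2, fun w hw => ?_⟩
  have hw : w.re ^ 2 + (w.im / t) ^ 2 < 1 := hw
  have h1 : |w.re| ≤ 1 := by rw [abs_le_one_iff_mul_self_le_one]; nlinarith [sq_nonneg (w.im / t)]
  have h2 : |w.im / t| ≤ 1 := by rw [abs_le_one_iff_mul_self_le_one]; nlinarith [sq_nonneg w.re]
  rw [abs_div, abs_of_pos ht, div_le_one ht] at h2
  have := Complex.norm_le_abs_re_add_abs_im w
  linarith

lemma kvD_mem (t x y r θ : ℝ) (ht : 0 < t) (hp : x ^ 2 + (y / t) ^ 2 = 1) (hr : 0 < r) :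
    ((⟨x, y⟩ : ℂ) + (r : ℂ) * (cos θ + sin θ * Complex.I)) ∈ kvD t ↔ r < kvl t x y θ := by
  have hQ := kvQ_pos t ht θ
  have e : ((⟨x, y⟩ : ℂ) + (r : ℂ) * (cos θ + sin θ * Complex.I)) = ⟨x + r * cos θ, y + r * sin θ⟩ := by
    generalize cos θ = X
    generalize sin θ = Y
    apply Complex.ext <;> simp
  rw [e]
  change (x + r * cos θ) ^ 2 + ((y + r * sin θ) / t) ^ 2 < 1 ↔ _
  rw [kvl, lt_div_iff₀ hQ]
  have e2 : (x + r * cos θ) ^ 2 + ((y + r * sin θ) / t) ^ 2 - 1 =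
      r / t ^ 2 * (r * (t ^ 2 * cos θ ^ 2 + sin θ ^ 2) + 2 * (t ^ 2 * x * cos θ + y * sin θ)) := by
    have : x ^ 2 = 1 - (y / t) ^ 2 := by linarith
    have : (x + r * cos θ) ^ 2 = 1 - (y / t) ^ 2 + 2 * x * r * cos θ + r ^ 2 * cos θ ^ 2 := by
      rw [← this]; ring
    rw [this]; field_simp; ring
  have hpos : 0 < r / t ^ 2 := by positivity
  constructor
  · intro h
    have h3 : r / t ^ 2 * (r * (t ^ 2 * cos θ ^ 2 + sin θ ^ 2) + 2 * (t ^ 2 * x * cos θ + y * sin θ)) < 0 := by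
      rw [← e2]; linarith
    have := neg_of_mul_neg_right h3 hpos.le
    linarith
  · intro h
    have h3 : r / t ^ 2 * (r * (t ^ 2 * cos θ ^ 2 + sin θ ^ 2) + 2 * (t ^ 2 * x * cos θ + y * sin θ)) < 0 :=
      mul_neg_of_pos_of_neg hpos (by linarith)
    linarith

lemma kv_polar (t x y : ℝ) (ht : 0 < t) (hp : x ^ 2 + (y / t) ^ 2 = 1) :
    ∫ w in kvD t, ((⟨x, y⟩ : ℂ) - w)⁻¹ =
      ∫ θ in (-π)..π, (max (kvl t x y θ) 0) • (-((cos θ : ℂ) - sin θ * Complex.I)) := by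
  set z : ℂ := ⟨x, y⟩ with hz
  rw [← integral_indicator (kvD_meas t), ← integral_add_left_eq_self _ z,
    ← Complex.integral_comp_polarCoord_symm]
  set H : ℝ × ℝ → ℂ := fun p => if p.1 < kvl t x y p.2 then (-((cos p.2 : ℂ) - sin p.2 * Complex.I)) else 0 with hH
  have hmt : MeasurableSet (polarCoord.target) := polarCoord.open_target.measurableSet
  have e1 : ∫ p in polarCoord.target, p.1 • (kvD t).indicator (fun w => (z - w)⁻¹) (z + Complex.polarCoord.symm p)
      = ∫ p in polarCoord.target, H p := by
    apply setIntegral_congr_fun hmt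
    intro p hpm
    rw [polarCoord_target] at hpm
    have hr : 0 < p.1 := hpm.1
    simp only [Complex.polarCoord_symm_apply]
    have hmem := kvD_mem t x y p.1 p.2 ht hp hr
    by_cases h : p.1 < kvl t x y p.2
    · rw [Set.indicator_of_mem (hmem.2 h)]
      simp only [hH, if_pos h]
      have hu : ((cos p.2 : ℂ) + sin p.2 * Complex.I) * ((cos p.2 : ℂ) - sin p.2 * Complex.I) = 1 := by
        have : ((cos p.2 : ℂ)) ^ 2 + (sin p.2 : ℂ) ^ 2 = 1 := by
          norm_cast; exact Real.cos_sq_add_sin_sq p.2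
        linear_combination this - (sin p.2 : ℂ)^2 * Complex.I_sq
      have hu0 : ((cos p.2 : ℂ) + sin p.2 * Complex.I) ≠ 0 := left_ne_zero_of_mul_eq_one hu
      rw [eq_inv_of_mul_eq_one_right hu, Complex.real_smul, ← hz, sub_add_cancel_left]
      have : (p.1 : ℂ) ≠ 0 := by exact_mod_cast hr.ne'
      field_simp
    · rw [Set.indicator_of_notMem (fun h' => h (hmem.1 h'))]
      simp only [hH, if_neg h, smul_zero]
  rw [e1, polarCoord_target, Measure.volume_eq_prod, ← Measure.prod_restrict]
  obtain ⟨M, hM⟩ : ∃ M, ∀ θ ∈ Set.Icc (-π) π, kvl t x y θ ≤ M := by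
    obtain ⟨M, hM⟩ := (isCompact_Icc (a := -π) (b := π)).bddAbove_image (kvl_cont t x y ht).continuousOn
    exact ⟨M, fun θ hθ => hM ⟨θ, hθ, rfl⟩⟩
  have hHm : Measurable H := by
    apply Measurable.ite
    · exact measurableSet_lt measurable_fst ((kvl_cont t x y ht).measurable.comp measurable_snd)
    · fun_prop
    · fun_prop
  have hHi : Integrable H ((volume.restrict (Set.Ioi 0)).prod (volume.restrict (Set.Ioo (-π) π))) := by
    have hb : Integrable (fun r : ℝ => (Set.Iic M).indicator (fun _ => (1:ℝ)) r) (volume.restrict (Set.Ioi 0)) := by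
      rw [integrable_indicator_iff measurableSet_Iic, IntegrableOn, Measure.restrict_restrict measurableSet_Iic,
        Set.inter_comm, Set.Ioi_inter_Iic]
      exact integrableOn_const (by simp)
    refine Integrable.mono' (hb.comp_fst (volume.restrict (Set.Ioo (-π) π))) hHm.aestronglyMeasurable ?_
    rw [Measure.prod_restrict]
    filter_upwards [ae_restrict_mem (measurableSet_Ioi.prod measurableSet_Ioo)] with p hpm
    by_cases h : p.1 < kvl t x y p.2
    · simp only [hH, if_pos h]
      have : p.1 ∈ Set.Iic M := h.le.trans (hM _ (Set.Ioo_subset_Icc_self hpm.2))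
      rw [Set.indicator_of_mem this, norm_neg]
      have : (cos p.2 : ℂ) - sin p.2 * Complex.I = Complex.exp (((-p.2 : ℝ) : ℂ) * Complex.I) := by
        rw [Complex.exp_mul_I]; push_cast; simp; ring
      rw [this, Complex.norm_exp_ofReal_mul_I]
    · simp only [hH, if_neg h, norm_zero]
      exact Set.indicator_nonneg (fun _ _ => zero_le_one) _
  rw [integral_prod_symm _ hHi, intervalIntegral.integral_of_le (by linarith [Real.pi_pos]),
    integral_Ioc_eq_integral_Ioo]
  apply integral_congr_ae
  refine Filter.Eventually.of_forall fun θ => ?_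
  have : ∀ r, H (r, θ) = (Set.Iio (kvl t x y θ)).indicator (fun _ => (-((cos θ : ℂ) - sin θ * Complex.I))) r := by
    intro r
    by_cases h : r < kvl t x y θ
    · rw [Set.indicator_of_mem (Set.mem_Iio.2 h)]; simp only [hH, if_pos h]
    · rw [Set.indicator_of_notMem (fun h' => h (Set.mem_Iio.1 h'))]; simp only [hH, if_neg h]
  simp only [this]
  rw [integral_indicator measurableSet_Iio, Measure.restrict_restrict measurableSet_Iio,
    Set.inter_comm, Set.Ioi_inter_Iio, setIntegral_const]
  simp [Measure.real, Real.volume_Ioo, ENNReal.toReal_ofReal_eq_iff, ENNReal.toReal_ofReal']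

lemma kv_cauchy (t x y : ℝ) (ht : 0 < t) (ht1 : t < 1) (hp : x ^ 2 + (y / t) ^ 2 = 1) :
    ∫ w in kvD t, ((⟨x, y⟩ : ℂ) - w)⁻¹ = ⟨2 * π * (t * x) / (1 + t), -(2 * π * y / (1 + t))⟩ := by
  rw [kv_polar t x y ht hp]
  set h : ℝ → ℂ := fun θ => (max (kvl t x y θ) 0) • (-((cos θ : ℂ) - sin θ * Complex.I)) with hh
  have hc : Continuous h := by
    have := kvl_cont t x y ht
    simp only [hh]; fun_prop
  have hl : ∀ θ, kvl t x y (θ + π) = - kvl t x y θ := by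
    intro θ; simp only [kvl, cos_add_pi, sin_add_pi, neg_sq]; ring
  have hper : Function.Periodic h (2 * π) := by
    intro θ; simp only [hh, kvl, cos_add_two_pi, sin_add_two_pi]
  have hshift : ∫ θ in (-π)..π, h (θ + π) = ∫ θ in (-π)..π, h θ := by
    rw [intervalIntegral.integral_comp_add_right]
    have := hper.intervalIntegral_add_eq (-π) 0
    have e : -π + 2 * π = π := by ring
    rw [e] at this
    rw [this]; congr 1 <;> ring
  have hsum : ∀ θ, h θ + h (θ + π) = (kvl t x y θ) • (-((cos θ : ℂ) - sin θ * Complex.I)) := by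
    intro θ
    simp only [hh, hl, cos_add_pi, sin_add_pi]
    have : kvl t x y θ = max (kvl t x y θ) 0 - max (-kvl t x y θ) 0 := by
      rcases le_total 0 (kvl t x y θ) with h0 | h0
      · rw [max_eq_left h0, max_eq_right (by linarith)]; ring
      · rw [max_eq_right h0, max_eq_left (by linarith)]; ring
    nth_rewrite 3 [this]
    simp only [Complex.real_smul]
    push_cast
    ring
  have h2 : (2:ℂ) * ∫ θ in (-π)..π, h θ = ∫ θ in (-π)..π, (kvl t x y θ) • (-((cos θ : ℂ) - sin θ * Complex.I)) := by
    rw [two_mul]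
    nth_rewrite 2 [← hshift]
    have hc2 : Continuous (fun θ => h (θ + π)) := hc.comp (continuous_add_const π)
    rw [← intervalIntegral.integral_add (hc.intervalIntegrable _ _) (hc2.intervalIntegrable _ _)]
    simp_rw [hsum]
  have h3 : ∀ θ, (kvl t x y θ) • (-((cos θ : ℂ) - sin θ * Complex.I)) =
      (((2 * t ^ 2 * x) * (cos θ ^ 2 / (t ^ 2 * cos θ ^ 2 + sin θ ^ 2)) +
        (2 * y) * ((cos θ * sin θ) / (t ^ 2 * cos θ ^ 2 + sin θ ^ 2)) : ℝ) : ℂ) +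
      (((-2 * t ^ 2 * x) * ((cos θ * sin θ) / (t ^ 2 * cos θ ^ 2 + sin θ ^ 2)) +
        (-2 * y) * (sin θ ^ 2 / (t ^ 2 * cos θ ^ 2 + sin θ ^ 2)) : ℝ) : ℂ) * Complex.I := by
    intro θ
    rw [kvl, Complex.real_smul]
    push_cast
    ring
  have c1 := (kvQ_cont t ht (fun θ => cos θ ^ 2) (by fun_prop))
  have c2 := (kvQ_cont t ht (fun θ => sin θ ^ 2) (by fun_prop))
  have c3 := (kvQ_cont t ht (fun θ => cos θ * sin θ) (by fun_prop))
  simp_rw [h3] at h2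
  rw [intervalIntegral.integral_add (Continuous.intervalIntegrable (by fun_prop) _ _)
    (Continuous.intervalIntegrable (by fun_prop) _ _), intervalIntegral.integral_mul_const,
    intervalIntegral.integral_ofReal, intervalIntegral.integral_ofReal,
    intervalIntegral.integral_add (Continuous.intervalIntegrable (by fun_prop) _ _)
    (Continuous.intervalIntegrable (by fun_prop) _ _),
    intervalIntegral.integral_add (Continuous.intervalIntegrable (by fun_prop) _ _)
    (Continuous.intervalIntegrable (by fun_prop) _ _),
    intervalIntegral.integral_const_mul, intervalIntegral.integral_const_mul,
    intervalIntegral.integral_const_mul, intervalIntegral.integral_const_mul,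
    (kv_cos2 t ht ht1).1, (kv_cos2 t ht ht1).2, kv_cross] at h2
  have h4 : ∫ θ in (-π)..π, h θ = (1 / 2 : ℂ) * ((2:ℂ) * ∫ θ in (-π)..π, h θ) := by ring
  rw [h4, h2]
  have : 1 + t ≠ 0 := by linarith
  have ht0 : t ≠ 0 := ht.ne'
  have e1 : 2 * t ^ 2 * x * (2 * π / (t * (1 + t))) + 2 * y * 0 = 2 * (2 * π * (t * x) / (1 + t)) := by
    field_simp; ring
  have e2 : -2 * t ^ 2 * x * 0 + -2 * y * (2 * π / (1 + t)) = 2 * (-(2 * π * y / (1 + t))) := by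
    field_simp; ring
  rw [e1, e2]
  generalize 2 * π * (t * x) / (1 + t) = X
  generalize -(2 * π * y / (1 + t)) = Y
  apply Complex.ext <;> simp

/-- The isometry between `ℂ` and the Euclidean plane. -/
def kve : ℂ ≃ₗᵢ[ℝ] Pt := Complex.orthonormalBasisOneI.repr

lemma pt_zero (a b : ℝ) : pt a b 0 = a := rfl
lemma pt_one (a b : ℝ) : pt a b 1 = b := rfl

lemma kve_apply (z : ℂ) : kve z = pt z.re z.im := by
  ext i
  fin_cases i <;> simp [kve, pt]

lemma kve_symm (x : Pt) : kve.symm x = ⟨x 0, x 1⟩ := by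
  rw [LinearIsometryEquiv.symm_apply_eq, kve_apply]
  ext i
  fin_cases i <;> simp [pt]

lemma tanh_pos' (ξ : ℝ) (hξ : 0 < ξ) : 0 < Real.tanh ξ := by
  rw [Real.tanh_eq_sinh_div_cosh]
  exact div_pos (Real.sinh_pos_iff.2 hξ) (Real.cosh_pos ξ)

lemma tanh_lt_one' (ξ : ℝ) : Real.tanh ξ < 1 := by
  rw [Real.tanh_eq_sinh_div_cosh, div_lt_one (Real.cosh_pos ξ)]
  exact Real.sinh_lt_cosh ξ

lemma kv_pot (ξ : ℝ) (x : Pt) : ∫ y in Eell ξ, Real.log ‖x - y‖ =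
    ∫ w in kvD (Real.tanh ξ), Real.log ‖kve.symm x - w‖ := by
  have hm : MeasurePreserving kve volume volume := kve.measurePreserving
  have he : MeasurableEmbedding kve := kve.toHomeomorph.measurableEmbedding
  rw [← hm.setIntegral_preimage_emb he]
  have hs : kve ⁻¹' (Eell ξ) = kvD (Real.tanh ξ) := by
    ext w; simp only [Set.mem_preimage, kve_apply, Eell, kvD, Set.mem_setOf_eq, pt_zero, pt_one]
  rw [hs]
  congr 1; ext w
  rw [← kve.norm_map, map_sub, kve.apply_symm_apply]

lemma kv_grad (ξ : ℝ) (hξ : 0 < ξ) (x y : ℝ) (hp : x ^ 2 + (y / Real.tanh ξ) ^ 2 = 1) :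
    HasGradientAt (Ψell ξ) (pt (Real.tanh ξ ^ 2 / (1 + Real.tanh ξ) ^ 2 * x)
      (1 / (1 + Real.tanh ξ) ^ 2 * y)) (pt x y) := by
  have ht := tanh_pos' ξ hξ
  have ht1 := tanh_lt_one' ξ
  set t := Real.tanh ξ with htd
  have hV := kv_hasFDeriv (kvD t) (kvD_meas t) (kvD_bdd t ht ht1) ⟨x, y⟩
  rw [kv_cauchy t x y ht ht1 hp] at hV
  have hz : kve.symm (pt x y) = ⟨x, y⟩ := by rw [kve_symm, pt_zero, pt_one]
  rw [← hz] at hV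
  have hVc := HasFDerivAt.comp (pt x y) hV (kve.symm.toContinuousLinearEquiv.hasFDerivAt)
  have hN : HasFDerivAt (fun x : Pt => ‖x‖ ^ 2) _ (pt x y) := (hasStrictFDerivAt_norm_sq (pt x y)).hasFDerivAt
  have hT := (hVc.const_mul (1 / (2 * π))).sub (hN.const_mul (Ωell ξ / 2))
  have hΨ : Ψell ξ = fun x => (1 / (2 * π)) * ((fun z => ∫ w in kvD t, Real.log ‖z - w‖) ∘ kve.symm) x - Ωell ξ / 2 * ‖x‖ ^ 2 := by
    ext x
    simp only [Ψell, Function.comp, kv_pot]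
    rw [mul_div_right_comm]
  rw [HasGradientAt, hΨ]
  refine hT.congr_fderiv ?_
  ext v
  have hpi : π ≠ 0 := Real.pi_ne_zero
  have h1t : 1 + t ≠ 0 := by linarith
  have ht0 : t ≠ 0 := ht.ne'
  simp [kvL_apply, kve_symm, PiLp.inner_apply, Fin.sum_univ_two, pt_zero, pt_one, Ωell, ← htd]
  field_simp
  ring

lemma kv_gradnorm (ξ : ℝ) (hξ : 0 < ξ) (η : ℝ) :
    ‖gradient (Ψell ξ) (pt (cos η) (Real.tanh ξ * sin η))‖ =
      Real.tanh ξ / (1 + Real.tanh ξ) ^ 2 * Real.sqrt (sin η ^ 2 + Real.tanh ξ ^ 2 * cos η ^ 2) := by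
  have ht := tanh_pos' ξ hξ
  have hp : (cos η) ^ 2 + (Real.tanh ξ * sin η / Real.tanh ξ) ^ 2 = 1 := by
    rw [mul_div_cancel_left₀ _ ht.ne']; exact Real.cos_sq_add_sin_sq η
  rw [(kv_grad ξ hξ _ _ hp).gradient, EuclideanSpace.norm_eq, Fin.sum_univ_two, pt_zero, pt_one]
  set t := Real.tanh ξ
  rw [← Real.sqrt_sq (show 0 ≤ t / (1 + t) ^ 2 by positivity), ← Real.sqrt_mul (by positivity)]
  congr 1
  simp only [Real.norm_eq_abs, sq_abs]
  field_simp
  ring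

/-- Parametrization of the ellipse. -/
def kvγ (t η : ℝ) : Pt := pt (cos η) (t * sin η)

/-- Speed of the parametrization. -/
def kvs (t η : ℝ) : ℝ := Real.sqrt (sin η ^ 2 + t ^ 2 * cos η ^ 2)

lemma kvs_cont (t : ℝ) : Continuous (kvs t) := by unfold kvs; fun_prop

lemma kvs_pos (t : ℝ) (ht : 0 < t) (η : ℝ) : 0 < kvs t η := by
  apply Real.sqrt_pos.2
  have := kvQ_pos t ht η
  linarith

lemma pt_norm (a b : ℝ) : ‖pt a b‖ = Real.sqrt (a ^ 2 + b ^ 2) := by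
  rw [EuclideanSpace.norm_eq, Fin.sum_univ_two, pt_zero, pt_one]
  simp only [Real.norm_eq_abs, sq_abs]

lemma pt_sub (a b c d : ℝ) : pt a b - pt c d = pt (a - c) (b - d) := by
  ext i; fin_cases i <;> simp [pt]

lemma kvγ_deriv (t η : ℝ) : HasStrictDerivAt (kvγ t) (pt (-sin η) (t * cos η)) η := by
  have h := ((Real.hasStrictDerivAt_cos η).smul_const (pt 1 0)).fun_add
    (((Real.hasStrictDerivAt_sin η).const_mul t).smul_const (pt 0 1))
  have e1 : ∀ a b : ℝ, a • pt 1 0 + b • pt 0 1 = pt a b := by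
    intro a b; ext i; fin_cases i <;> simp [pt]
  simp only [e1] at h
  exact h

lemma kvγ_cont (t : ℝ) : Continuous (kvγ t) :=
  continuous_iff_continuousAt.2 fun η => (kvγ_deriv t η).hasDerivAt.continuousAt

lemma kvγ_local (t η ε : ℝ) (hε : 0 < ε) : ∃ δ > 0, ∀ x ∈ Metric.ball η δ, ∀ y ∈ Metric.ball η δ,
    (kvs t η - ε) * |x - y| ≤ ‖kvγ t x - kvγ t y‖ ∧ ‖kvγ t x - kvγ t y‖ ≤ (kvs t η + ε) * |x - y| := by
  have h := (hasStrictFDerivAt_iff_isLittleO.1 (kvγ_deriv t η).hasStrictFDerivAt).def hε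
  rw [nhds_prod_eq, Filter.eventually_prod_self_iff'] at h
  obtain ⟨U, hU, hh⟩ := h
  obtain ⟨δ, hδ, hb⟩ := Metric.mem_nhds_iff.1 hU
  refine ⟨δ, hδ, fun x hx y hy => ?_⟩
  have h1 := hh x (hb hx) y (hb hy)
  simp only [Real.norm_eq_abs, ContinuousLinearMap.toSpanSingleton_apply] at h1
  have h2 : ‖(x - y) • pt (-sin η) (t * cos η)‖ = kvs t η * |x - y| := by
    rw [norm_smul, pt_norm, Real.norm_eq_abs, mul_comm, kvs]; congr 2; ring
  have h3 := norm_sub_norm_le (kvγ t x - kvγ t y) ((x - y) • pt (-sin η) (t * cos η))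
  have h4 := norm_sub_norm_le ((x - y) • pt (-sin η) (t * cos η)) (kvγ t x - kvγ t y)
  rw [norm_sub_rev ((x - y) • pt (-sin η) (t * cos η))] at h4
  rw [h2] at h3 h4
  constructor <;> nlinarith

lemma kv_haus_upper (t K : ℝ) (hK : 0 ≤ K) (A : Set ℝ)
    (h : ∀ x ∈ A, ∀ y ∈ A, ‖kvγ t x - kvγ t y‖ ≤ K * |x - y|) :
    μH[1] (kvγ t '' A) ≤ ENNReal.ofReal K * volume A := by
  have hl : LipschitzOnWith (Real.toNNReal K) (kvγ t) A := by
    apply LipschitzOnWith.of_dist_le_mul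
    intro x hx y hy
    rw [dist_eq_norm, Real.dist_eq, Real.coe_toNNReal K hK]
    exact h x hx y hy
  have := hl.hausdorffMeasure_image_le (d := 1) zero_le_one
  rw [ENNReal.rpow_one, hausdorffMeasure_real] at this
  exact this

lemma kv_haus_lower (t K : ℝ) (hK : 0 < K) (A : Set ℝ)
    (h : ∀ x ∈ A, ∀ y ∈ A, K * |x - y| ≤ ‖kvγ t x - kvγ t y‖) :
    ENNReal.ofReal K * volume A ≤ μH[1] (kvγ t '' A) := by
  have hl : AntilipschitzWith (Real.toNNReal K⁻¹) (fun x : A => kvγ t x) := by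
    apply AntilipschitzWith.of_le_mul_dist
    intro x y
    rw [dist_eq_norm, Subtype.dist_eq, Real.dist_eq, Real.coe_toNNReal _ (by positivity), inv_mul_eq_div,
      le_div_iff₀ hK, mul_comm]
    exact h x x.2 y y.2
  have := hl.le_hausdorffMeasure_image (d := 1) zero_le_one Set.univ
  rw [ENNReal.rpow_one, ← isometry_subtype_coe.hausdorffMeasure_image (Or.inl zero_le_one),
    hausdorffMeasure_real, Set.image_univ, Subtype.range_coe] at this
  have e : (fun x : A => kvγ t x) '' Set.univ = kvγ t '' A := by
    rw [Set.image_univ, Set.image_eq_range]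
  rw [e] at this
  calc ENNReal.ofReal K * volume A ≤ ENNReal.ofReal K * (ENNReal.ofReal K⁻¹ * μH[1] (kvγ t '' A)) := by
        gcongr; exact this
    _ = μH[1] (kvγ t '' A) := by
        rw [← mul_assoc, ← ENNReal.ofReal_mul hK.le, mul_inv_cancel₀ hK.ne', ENNReal.ofReal_one, one_mul]

lemma kvγ_lip (t : ℝ) (ht : 0 < t) (ht1 : t < 1) (x y : ℝ) : ‖kvγ t x - kvγ t y‖ ≤ 2 * |x - y| := by
  rw [kvγ, kvγ, pt_sub, pt_norm]
  apply Real.sqrt_le_iff.2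
  refine ⟨by positivity, ?_⟩
  have h1 : |cos x - cos y| ≤ |x - y| := by
    simpa [Real.norm_eq_abs] using Real.abs_cos_sub_cos_le x y
  have h2 : |sin x - sin y| ≤ |x - y| := by
    simpa [Real.norm_eq_abs] using Real.abs_sin_sub_sin_le x y
  have h1' := sq_le_sq.2 (h1.trans (le_abs_self _))
  have h2' := sq_le_sq.2 (h2.trans (le_abs_self _))
  have : (t * sin x - t * sin y) ^ 2 = t ^ 2 * (sin x - sin y) ^ 2 := by ring
  rw [this, mul_pow, sq_abs]
  rw [sq_abs] at h1' h2'
  have h3 : t ^ 2 * (sin x - sin y) ^ 2 ≤ 1 * (sin x - sin y) ^ 2 :=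
    mul_le_mul_of_nonneg_right (by nlinarith) (sq_nonneg _)
  nlinarith [sq_nonneg (x - y)]

lemma kvγ_inj (t : ℝ) (ht : 0 < t) : Set.InjOn (kvγ t) (Set.Ico 0 (2 * π)) := by
  intro x hx y hy h
  have hc : cos x = cos y := congrArg (fun p : Pt => p 0) h
  have hs : sin x = sin y := by
    have : t * sin x = t * sin y := congrArg (fun p : Pt => p 1) h
    exact mul_left_cancel₀ ht.ne' this
  have := Real.Angle.cos_sin_inj hc hs
  obtain ⟨k, hk⟩ := Real.Angle.angle_eq_iff_two_pi_dvd_sub.1 this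
  have hpi := Real.pi_pos
  have h1 : (k:ℝ) < 1 := by by_contra! hh; nlinarith [hx.1, hx.2, hy.1, hy.2]
  have h2 : (-1:ℝ) < k := by by_contra! hh; nlinarith [hx.1, hx.2, hy.1, hy.2]
  have h3 : k = 0 := by
    have : k < 1 := by exact_mod_cast h1
    have : -1 < k := by exact_mod_cast h2
    omega
  rw [h3] at hk; simp at hk; linarith

lemma kv_haus_Ico (t : ℝ) (ht : 0 < t) (ht1 : t < 1) (a b : ℝ) (ha : 0 ≤ a) (hab : a ≤ b) (hb : b ≤ 2 * π) :
    μH[1] (kvγ t '' Set.Ico a b) = ENNReal.ofReal (∫ η in a..b, kvs t η) := by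
  have hfin : ∀ x y : ℝ, μH[1] (kvγ t '' Set.Ico x y) ≠ ⊤ := by
    intro x y
    refine ne_top_of_le_ne_top ?_ (kv_haus_upper t 2 (by norm_num) _ (fun x _ y _ => kvγ_lip t ht ht1 x y))
    rw [Real.volume_Ico]
    exact ENNReal.mul_ne_top ENNReal.ofReal_ne_top ENNReal.ofReal_ne_top
  set F : ℝ → ℝ := fun x => (μH[1] (kvγ t '' Set.Ico a x)).toReal with hF
  have hadd : ∀ x y, a ≤ x → x ≤ y → y ≤ b → F y - F x = (μH[1] (kvγ t '' Set.Ico x y)).toReal := by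
    intro x y hx hxy hy
    have hu : kvγ t '' Set.Ico a y = kvγ t '' Set.Ico a x ∪ kvγ t '' Set.Ico x y := by
      rw [← Set.image_union, Set.Ico_union_Ico_eq_Ico hx hxy]
    have hd : Disjoint (kvγ t '' Set.Ico a x) (kvγ t '' Set.Ico x y) := by
      rw [Set.disjoint_left]
      rintro _ ⟨u, hu, rfl⟩ ⟨v, hv, hvu⟩
      have := kvγ_inj t ht ⟨by linarith [hv.1], by linarith [hv.2]⟩ ⟨by linarith [hu.1], by linarith [hu.2]⟩ hvu
      linarith [hu.2, hv.1]
    have hm : MeasurableSet (kvγ t '' Set.Ico x y) :=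
      measurableSet_Ico.image_of_continuousOn_injOn (kvγ_cont t).continuousOn
        ((kvγ_inj t ht).mono (Set.Ico_subset_Ico (by linarith) (by linarith)))
    simp only [hF]
    rw [hu, measure_union hd hm, ENNReal.toReal_add (hfin _ _) (hfin _ _)]; ring
  have hup : ∀ K x y, 0 ≤ K → x ≤ y → (∀ u ∈ Set.Ico x y, ∀ v ∈ Set.Ico x y, ‖kvγ t u - kvγ t v‖ ≤ K * |u - v|) →
      (μH[1] (kvγ t '' Set.Ico x y)).toReal ≤ K * (y - x) := by
    intro K x y hK hxy h
    have := kv_haus_upper t K hK _ h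
    rw [Real.volume_Ico, ← ENNReal.ofReal_mul hK] at this
    exact ENNReal.toReal_le_of_le_ofReal (mul_nonneg hK (by linarith)) this
  have hlo : ∀ K x y, 0 < K → x ≤ y → (∀ u ∈ Set.Ico x y, ∀ v ∈ Set.Ico x y, K * |u - v| ≤ ‖kvγ t u - kvγ t v‖) →
      K * (y - x) ≤ (μH[1] (kvγ t '' Set.Ico x y)).toReal := by
    intro K x y hK hxy h
    have := kv_haus_lower t K hK _ h
    rw [Real.volume_Ico, ← ENNReal.ofReal_mul hK.le] at this
    exact (ENNReal.ofReal_le_iff_le_toReal (hfin _ _)).1 this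
  have hmonoF : ∀ x y, a ≤ x → x ≤ y → y ≤ b → |F y - F x| ≤ 2 * |y - x| := by
    intro x y hx hxy hy
    rw [hadd x y hx hxy hy, abs_of_nonneg ENNReal.toReal_nonneg, abs_of_nonneg (by linarith)]
    exact hup 2 x y (by norm_num) hxy (fun u _ v _ => kvγ_lip t ht ht1 u v)
  have hcont : ContinuousOn F (Set.Icc a b) := by
    have : LipschitzOnWith 2 F (Set.Icc a b) := by
      apply LipschitzOnWith.of_dist_le_mul
      intro x hx y hy
      rw [Real.dist_eq, Real.dist_eq]
      rcases le_total x y with h | h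
      · rw [abs_sub_comm, abs_sub_comm x]; exact hmonoF x y hx.1 h hy.2
      · exact hmonoF y x hy.1 h hx.2
    exact this.continuousOn
  have hder : ∀ x ∈ Set.Ico a b, HasDerivWithinAt F (kvs t x) (Set.Ici x) x := by
    intro x hx
    rw [hasDerivWithinAt_iff_isLittleO, Asymptotics.isLittleO_iff]
    intro c hc
    have hsp := kvs_pos t ht x
    set ε := min c (kvs t x / 2) with hε
    have hε0 : 0 < ε := lt_min hc (by linarith)
    have hεc : ε ≤ c := min_le_left _ _
    have hεs : ε < kvs t x := (min_le_right _ _).trans_lt (by linarith)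
    obtain ⟨δ, hδ, hh⟩ := kvγ_local t x ε hε0
    have hU : Set.Iio (min b (x + δ)) ∈ nhdsWithin x (Set.Ici x) :=
      mem_nhdsWithin_of_mem_nhds (Iio_mem_nhds (lt_min hx.2 (by linarith)))
    filter_upwards [hU, self_mem_nhdsWithin] with y hy hxy
    have hxy : x ≤ y := hxy
    have hyb : y ≤ b := (lt_of_lt_of_le hy (min_le_left _ _)).le
    have hyδ : y < x + δ := lt_of_lt_of_le hy (min_le_right _ _)
    have hsub : ∀ u ∈ Set.Ico x y, u ∈ Metric.ball x δ := by
      intro u hu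
      rw [Metric.mem_ball, Real.dist_eq, abs_of_nonneg (by linarith [hu.1])]; linarith [hu.2]
    rw [hadd x y hx.1 hxy hyb, smul_eq_mul, Real.norm_eq_abs, Real.norm_eq_abs, abs_of_nonneg (sub_nonneg.2 hxy)]
    have h1 := hup (kvs t x + ε) x y (by linarith) hxy (fun u hu v hv => (hh u (hsub u hu) v (hsub v hv)).2)
    have h2 := hlo (kvs t x - ε) x y (by linarith) hxy (fun u hu v hv => (hh u (hsub u hu) v (hsub v hv)).1)
    rw [abs_le]
    constructor <;> nlinarith
  have hsder : ∀ x, HasDerivAt (fun x => ∫ η in a..x, kvs t η) (kvs t x) x := fun x =>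
    (kvs_cont t).integral_hasStrictDerivAt a x |>.hasDerivAt
  have hconst := constant_of_has_deriv_right_zero (f := fun x => F x - ∫ η in a..x, kvs t η)
    (hcont.sub (fun x _ => (hsder x).continuousAt.continuousWithinAt))
    (fun x hx => by simpa using (hder x hx).fun_sub (hsder x).hasDerivWithinAt) b ⟨hab, le_rfl⟩
  have hFa : F a = 0 := by simp [hF]
  simp only [hFa, intervalIntegral.integral_same, sub_zero] at hconst
  rw [← ENNReal.ofReal_toReal (hfin a b)]
  congr 1
  change F b = _
  linarith

lemma kvγ_mem (t : ℝ) (ht : 0 < t) (η : ℝ) : (kvγ t η 0) ^ 2 + (kvγ t η 1 / t) ^ 2 = 1 := by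
  simp only [kvγ, pt_zero, pt_one]
  rw [mul_div_cancel_left₀ _ ht.ne']; exact Real.cos_sq_add_sin_sq η

lemma kvγ_surj (t : ℝ) (ht : 0 < t) (x : Pt) (hx : (x 0) ^ 2 + (x 1 / t) ^ 2 = 1) :
    ∃ η ∈ Set.Ico 0 (2 * π), kvγ t η = x := by
  have hper : Function.Periodic (kvγ t) (2 * π) := by
    intro η; simp [kvγ]
  have hn : ‖(⟨x 0, x 1 / t⟩ : ℂ)‖ = 1 := by
    rw [Complex.norm_eq_sqrt_sq_add_sq, hx, Real.sqrt_one]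
  have hne : (⟨x 0, x 1 / t⟩ : ℂ) ≠ 0 := by
    intro h; rw [h] at hn; simp at hn
  obtain ⟨η, hη, he⟩ := hper.exists_mem_Ico₀ Real.two_pi_pos (Complex.arg ⟨x 0, x 1 / t⟩)
  refine ⟨η, hη, ?_⟩
  rw [← he, kvγ, Complex.cos_arg hne, Complex.sin_arg, hn]
  ext i
  fin_cases i
  · simp [pt]
  · simp [pt]; field_simp

lemma kv_frontier (ξ : ℝ) (hξ : 0 < ξ) :
    frontier (Eell ξ) = {x : Pt | (x 0) ^ 2 + (x 1 / Real.tanh ξ) ^ 2 = 1} := by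
  set t := Real.tanh ξ with ht
  have hfc : Continuous (fun x : Pt => (x 0) ^ 2 + (x 1 / t) ^ 2) := by fun_prop
  apply Set.Subset.antisymm
  · exact frontier_lt_subset_eq hfc continuous_const
  · intro x hx
    have hx : (x 0) ^ 2 + (x 1 / t) ^ 2 = 1 := hx
    have ho : IsOpen (Eell ξ) := isOpen_lt hfc continuous_const
    rw [frontier, ho.interior_eq]
    refine ⟨?_, fun h => ?_⟩
    · have ht1 : Filter.Tendsto (fun r : ℝ => r • x) (nhdsWithin 1 (Set.Iio 1)) (nhds x) := by
        have : ContinuousAt (fun r : ℝ => r • x) 1 := by fun_prop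
        have h2 := this.tendsto
        rw [one_smul] at h2
        exact h2.mono_left nhdsWithin_le_nhds
      refine mem_closure_of_tendsto ht1 ?_
      filter_upwards [self_mem_nhdsWithin, mem_nhdsWithin_of_mem_nhds (Ioi_mem_nhds (show (0:ℝ) < 1 by norm_num))] with r hr hr0
      have hr : r < 1 := hr
      have hr0 : 0 < r := hr0
      change ((r • x) 0) ^ 2 + ((r • x) 1 / t) ^ 2 < 1
      have : ((r • x) 0) ^ 2 + ((r • x) 1 / t) ^ 2 = r ^ 2 * ((x 0) ^ 2 + (x 1 / t) ^ 2) := by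
        simp only [PiLp.smul_apply, smul_eq_mul]; ring
      rw [this, hx]; nlinarith
    · have : (x 0) ^ 2 + (x 1 / t) ^ 2 < 1 := h
      linarith

lemma kv_curve_integral (ξ : ℝ) (hξ : 0 < ξ) (f : Pt → ℝ) :
    ∫ y in frontier (Eell ξ), f y ∂μH[1] =
      ∫ η in (0:ℝ)..(2 * π), kvs (Real.tanh ξ) η * f (kvγ (Real.tanh ξ) η) := by
  have ht := tanh_pos' ξ hξ
  have ht1 := tanh_lt_one' ξ
  have hpi := Real.two_pi_pos
  rw [kv_frontier ξ hξ]
  set t := Real.tanh ξ with htd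
  set g : Set.Ico (0:ℝ) (2 * π) → Pt := fun x => kvγ t x with hg
  have hgi : Function.Injective g := fun x y h => Subtype.ext (kvγ_inj t ht x.2 y.2 h)
  haveI : StandardBorelSpace (Set.Ico (0:ℝ) (2 * π)) := measurableSet_Ico.standardBorel
  have hge : MeasurableEmbedding g :=
    ((kvγ_cont t).comp continuous_subtype_val).measurable.measurableEmbedding hgi
  have hrange : Set.range g = {x : Pt | (x 0) ^ 2 + (x 1 / t) ^ 2 = 1} := by
    ext x; constructor
    · rintro ⟨η, rfl⟩; exact kvγ_mem t ht η
    · intro hx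
      obtain ⟨η, hη, h⟩ := kvγ_surj t ht x hx
      exact ⟨⟨η, hη⟩, h⟩
  rw [← hrange, ← hge.map_comap, hge.integral_map]
  set ν := Measure.comap g (μH[1] : Measure Pt) with hν
  have hve : MeasurableEmbedding (Subtype.val : Set.Ico (0:ℝ) (2 * π) → ℝ) :=
    MeasurableEmbedding.subtype_coe measurableSet_Ico
  have e1 : ∫ x, f (g x) ∂ν = ∫ η, f (kvγ t η) ∂(ν.map Subtype.val) := by
    rw [hve.integral_map]
  rw [e1]
  have hmeas : ∀ A : Set ℝ, MeasurableSet A → ν.map Subtype.val A = μH[1] (kvγ t '' (A ∩ Set.Ico 0 (2 * π))) := by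
    intro A hA
    rw [Measure.map_apply hve.measurable hA, hν, hge.comap_apply]
    congr 1
    ext x; constructor
    · rintro ⟨η, hη, rfl⟩; exact ⟨η, ⟨hη, η.2⟩, rfl⟩
    · rintro ⟨η, ⟨h1, h2⟩, rfl⟩; exact ⟨⟨η, h2⟩, h1, rfl⟩
  have hν' : (volume.restrict (Set.Ico 0 (2 * π))).withDensity (fun η => ENNReal.ofReal (kvs t η)) = ν.map Subtype.val := by
    have hfin : IsFiniteMeasure ((volume.restrict (Set.Ico 0 (2 * π))).withDensity (fun η => ENNReal.ofReal (kvs t η))) := by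
      apply isFiniteMeasure_withDensity_ofReal
      exact (((kvs_cont t).integrableOn_Icc (a := 0) (b := 2 * π)).mono_set Set.Ico_subset_Icc_self).2
    apply Measure.ext_of_Ico
    intro a b hab
    rw [hmeas _ measurableSet_Ico, withDensity_apply _ measurableSet_Ico,
      Measure.restrict_restrict measurableSet_Ico, Set.Ico_inter_Ico]
    rcases le_total (min b (2 * π)) (max a 0) with h | h
    · rw [Set.Ico_eq_empty (not_lt.2 h)]; simp
    · rw [kv_haus_Ico t ht ht1 _ _ (le_max_right _ _) h (min_le_right _ _),
        intervalIntegral.integral_of_le h, integral_Ioc_eq_integral_Ioo, ← integral_Ico_eq_integral_Ioo,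
        ofReal_integral_eq_lintegral_ofReal]
      · exact ((kvs_cont t).integrableOn_Icc).mono_set Set.Ico_subset_Icc_self
      · exact Filter.Eventually.of_forall fun η => (kvs_pos t ht η).le
  rw [← hν', integral_withDensity_eq_integral_toReal_smul (by have := kvs_cont t; fun_prop) (by simp),
    intervalIntegral.integral_of_le hpi.le, integral_Ioc_eq_integral_Ioo, ← integral_Ico_eq_integral_Ioo]
  congr 1; ext η
  rw [ENNReal.toReal_ofReal (kvs_pos t ht η).le, smul_eq_mul]

/-- Logarithmic kernel on the circle. -/
def kvK (r s : ℝ) : ℝ := Real.log ‖1 - (r:ℂ) * Complex.exp (s * Complex.I)‖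

lemma kv_exp_int (m : ℤ) : ∫ s in (0:ℝ)..(2 * π), Complex.exp (Complex.I * m * s) = if m = 0 then (2 * π : ℂ) else 0 := by
  split_ifs with h
  · subst h; simp
  · rw [integral_exp_mul_complex (by simp [h])]
    have : Complex.exp (Complex.I * m * ((2 * π : ℝ) : ℂ)) = 1 := by
      rw [Complex.exp_eq_one_iff]; exact ⟨m, by push_cast; ring⟩
    rw [this]; simp

lemma kv_cos_int (n : ℕ) (hn : n ≠ 0) (k : ℤ) :
    ∫ s in (0:ℝ)..(2 * π), ((cos (n * s) : ℝ) : ℂ) * Complex.exp (-Complex.I * k * s) =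
      if n = k.natAbs then (π : ℂ) else 0 := by
  have e : ∀ s : ℝ, ((cos (n * s) : ℝ) : ℂ) * Complex.exp (-Complex.I * k * s) =
      (1 / 2) * Complex.exp (Complex.I * ((n - k : ℤ) : ℂ) * s) + (1 / 2) * Complex.exp (Complex.I * ((-n - k : ℤ) : ℂ) * s) := by
    intro s
    push_cast
    rw [Complex.cos, div_mul_eq_mul_div, add_mul, ← Complex.exp_add, ← Complex.exp_add]
    ring_nf
  simp_rw [e]
  rw [intervalIntegral.integral_add (by apply Continuous.intervalIntegrable; fun_prop) (by apply Continuous.intervalIntegrable; fun_prop),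
    intervalIntegral.integral_const_mul, intervalIntegral.integral_const_mul, kv_exp_int, kv_exp_int]
  by_cases h : n = k.natAbs
  · rw [if_pos h]
    rcases Int.natAbs_eq k with h1 | h1
    · rw [if_pos (by omega), if_neg (by omega)]; ring
    · rw [if_neg (by omega), if_pos (by omega)]; ring
  · rw [if_neg h, if_neg (by omega), if_neg (by omega)]; ring

lemma kvK_hasSum (r : ℝ) (hr : 0 ≤ r) (hr1 : r < 1) (s : ℝ) :
    HasSum (fun n : ℕ => -(r ^ n / n) * cos (n * s)) (kvK r s) := by
  have hz : ‖(r:ℂ) * Complex.exp (s * Complex.I)‖ < 1 := by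
    rw [norm_mul, Complex.norm_exp_ofReal_mul_I, mul_one, Complex.norm_real, Real.norm_of_nonneg hr]; exact hr1
  have h := (Complex.hasSum_re (Complex.hasSum_taylorSeries_neg_log hz)).neg
  rw [Complex.neg_re, neg_neg, Complex.log_re] at h
  refine h.congr_fun ?_ |> id
  intro n
  have : ((r:ℂ) * Complex.exp (s * Complex.I)) ^ n / n = ((r ^ n / n : ℝ) : ℂ) * Complex.exp ((n * s : ℝ) * Complex.I) := by
    rw [mul_pow, ← Complex.exp_nat_mul]; push_cast; ring_nf
  rw [this, Complex.re_ofReal_mul, Complex.exp_ofReal_mul_I_re]; ring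

lemma kvK_coeff_lt (r : ℝ) (hr : 0 ≤ r) (hr1 : r < 1) (k : ℤ) :
    ∫ s in (0:ℝ)..(2 * π), (kvK r s : ℂ) * Complex.exp (-Complex.I * k * s) =
      ((-(π * r ^ k.natAbs / k.natAbs) : ℝ) : ℂ) := by
  have hnorm : ∀ s : ℝ, ‖Complex.exp (-Complex.I * k * s)‖ = 1 := by
    intro s
    have : -Complex.I * k * s = ((-(k * s) : ℝ) : ℂ) * Complex.I := by push_cast; ring
    rw [this, Complex.norm_exp_ofReal_mul_I]
  have h := intervalIntegral.hasSum_integral_of_dominated_convergence (μ := volume) (a := 0) (b := 2 * π)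
    (F := fun (n : ℕ) (s : ℝ) => ((-(r ^ n / n) * cos (n * s) : ℝ) : ℂ) * Complex.exp (-Complex.I * k * s))
    (f := fun s => (kvK r s : ℂ) * Complex.exp (-Complex.I * k * s))
    (fun n _ => r ^ n) (fun n => Continuous.aestronglyMeasurable (by fun_prop))
    (fun n => Filter.Eventually.of_forall fun s _ => by
      rw [norm_mul, hnorm, mul_one, Complex.norm_real, norm_mul, norm_neg, norm_div, norm_pow, Real.norm_of_nonneg hr]
      have h1 : ‖cos (n * s)‖ ≤ 1 := by rw [Real.norm_eq_abs]; exact Real.abs_cos_le_one _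
      have h2 : r ^ n / ‖(n:ℝ)‖ ≤ r ^ n := by
        rcases Nat.eq_zero_or_pos n with h | h
        · subst h; simp
        · apply div_le_self (by positivity)
          simp; exact h
      calc r ^ n / ‖(n:ℝ)‖ * ‖cos (n * s)‖ ≤ r ^ n * 1 := by gcongr
        _ = r ^ n := mul_one _)
    (Filter.Eventually.of_forall fun s _ => summable_geometric_of_lt_one hr hr1)
    intervalIntegrable_const
    (Filter.Eventually.of_forall fun s _ =>
      (Complex.hasSum_ofReal.2 (kvK_hasSum r hr hr1 s)).mul_right _)
  refine h.unique ?_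
  have e : ∀ n : ℕ, ∫ s in (0:ℝ)..(2 * π), ((-(r ^ n / n) * cos (n * s) : ℝ) : ℂ) * Complex.exp (-Complex.I * k * s)
      = if n = k.natAbs then ((-(π * r ^ k.natAbs / k.natAbs) : ℝ) : ℂ) else 0 := by
    intro n
    rcases Nat.eq_zero_or_pos n with hn | hn
    · subst hn
      split_ifs with h
      · rw [← h]; simp
      · simp
    · have := kv_cos_int n hn.ne' k
      simp_rw [Complex.ofReal_mul, mul_assoc]
      simp_rw [mul_assoc] at this
      rw [intervalIntegral.integral_const_mul, this]
      split_ifs with h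
      · rw [← h]; push_cast; ring
      · simp
  simp_rw [e]
  exact hasSum_ite_eq _ _

lemma kvK_int (r : ℝ) (hr : 0 ≤ r) (hr1 : r ≤ 1) : IntervalIntegrable (kvK r) volume 0 (2 * π) := by
  rcases hr1.lt_or_eq with h | h
  · apply Continuous.intervalIntegrable
    unfold kvK
    apply Continuous.log (by fun_prop)
    intro s hs
    rw [norm_eq_zero, sub_eq_zero] at hs
    have := congrArg norm hs
    rw [norm_mul, Complex.norm_exp_ofReal_mul_I, mul_one, Complex.norm_real, Real.norm_of_nonneg hr, norm_one] at this
    linarith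
  · have := circleIntegrable_log_norm_sub_const (a := (1:ℂ)) (c := 0) 1
    unfold CircleIntegrable at this
    refine this.congr_ae ?_ |> id
    refine Filter.Eventually.of_forall fun s => ?_
    simp only [kvK, h, circleMap]
    rw [norm_sub_rev]; simp

lemma kvK_bound (r : ℝ) (hr : 0 ≤ r) (hr1 : r < 1) (s : ℝ) (hs : Complex.exp (s * Complex.I) ≠ 1) :
    |kvK r s| ≤ |kvK 1 s| + Real.log 2 := by
  set z := Complex.exp (s * Complex.I) with hz
  have hzn : ‖z‖ = 1 := Complex.norm_exp_ofReal_mul_I s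
  have hn : ‖(r:ℂ) * z‖ = r := by rw [norm_mul, hzn, mul_one, Complex.norm_real, Real.norm_of_nonneg hr]
  have h1 : ‖1 - (r:ℂ) * z‖ ≤ 2 := (norm_sub_le _ _).trans (by rw [norm_one, hn]; linarith)
  have h2 : 1 - r ≤ ‖1 - (r:ℂ) * z‖ := by
    have := norm_sub_norm_le 1 ((r:ℂ) * z)
    rwa [norm_one, hn] at this
  have h3 : ‖1 - z‖ ≤ ‖1 - (r:ℂ) * z‖ + (1 - r) := by
    have : 1 - z = (1 - (r:ℂ) * z) - ((1 - r : ℝ) : ℂ) * z := by push_cast; ring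
    rw [this]
    refine (norm_sub_le _ _).trans ?_
    rw [norm_mul, hzn, mul_one, Complex.norm_real, Real.norm_of_nonneg (by linarith)]
  have h4 : 0 < ‖1 - z‖ := norm_pos_iff.2 (sub_ne_zero.2 hs.symm)
  have e1 : kvK 1 s = Real.log ‖1 - z‖ := by simp [kvK, hz]
  have e2 : kvK r s = Real.log ‖1 - (r:ℂ) * z‖ := rfl
  have l1 : kvK r s ≤ Real.log 2 := Real.log_le_log (by linarith) h1
  have l2 : kvK 1 s ≤ Real.log 2 + kvK r s := by
    rw [e1, e2, ← Real.log_mul (by norm_num) (by linarith)]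
    exact Real.log_le_log h4 (by linarith)
  rw [abs_le]
  constructor
  · linarith [neg_abs_le (kvK 1 s)]
  · linarith [abs_nonneg (kvK 1 s)]

lemma kvK_coeff (r : ℝ) (hr : 0 ≤ r) (hr1 : r ≤ 1) (k : ℤ) :
    ∫ s in (0:ℝ)..(2 * π), (kvK r s : ℂ) * Complex.exp (-Complex.I * k * s) =
      ((-(π * r ^ k.natAbs / k.natAbs) : ℝ) : ℂ) := by
  rcases hr1.lt_or_eq with h | h
  · exact kvK_coeff_lt r hr h k
  subst h
  have hnorm : ∀ s : ℝ, ‖Complex.exp (-Complex.I * k * s)‖ = 1 := by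
    intro s
    have : -Complex.I * k * s = ((-(k * s) : ℝ) : ℂ) * Complex.I := by push_cast; ring
    rw [this, Complex.norm_exp_ofReal_mul_I]
  have hne : ∀ᵐ s : ℝ, s ∈ Set.uIoc 0 (2 * π) → Complex.exp (s * Complex.I) ≠ 1 := by
    have : ∀ᵐ s : ℝ, s ≠ 2 * π := by
      rw [ae_iff]; simp
    filter_upwards [this] with s hs hmem h
    rw [Set.uIoc_of_le Real.two_pi_pos.le] at hmem
    obtain ⟨n, hn⟩ := Complex.exp_eq_one_iff.1 h
    have hn' : s = n * (2 * π) := by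
      have h2 : (s:ℂ) * Complex.I = ((n * (2 * π) : ℝ) : ℂ) * Complex.I := by rw [hn]; push_cast; ring
      exact_mod_cast mul_right_cancel₀ Complex.I_ne_zero h2
    have hpi := Real.pi_pos
    have h1 : (0:ℝ) < n := by by_contra! hh; nlinarith [hmem.1]
    have h2 : (n:ℝ) < 2 := by by_contra! hh; nlinarith [hmem.2]
    have h3 : n = 1 := by
      have : 0 < n := by exact_mod_cast h1
      have : n < 2 := by exact_mod_cast h2
      omega
    subst h3; apply hs; rw [hn']; simp
  have hev : ∀ᶠ r : ℝ in nhdsWithin 1 (Set.Iio 1), 0 ≤ r ∧ r < 1 := by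
    filter_upwards [self_mem_nhdsWithin, mem_nhdsWithin_of_mem_nhds (Ioi_mem_nhds (show (0:ℝ) < 1 by norm_num))] with r h1 h2
    exact ⟨le_of_lt h2, h1⟩
  have h := intervalIntegral.tendsto_integral_filter_of_dominated_convergence (μ := volume) (a := 0) (b := 2 * π)
    (l := nhdsWithin (1:ℝ) (Set.Iio 1))
    (F := fun (r : ℝ) (s : ℝ) => (kvK r s : ℂ) * Complex.exp (-Complex.I * k * s))
    (f := fun s => (kvK 1 s : ℂ) * Complex.exp (-Complex.I * k * s))
    (fun s => |kvK 1 s| + Real.log 2)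
    (by
      filter_upwards [hev] with r hr
      have h1 := (intervalIntegrable_iff.1 (kvK_int r hr.1 hr.2.le)).aestronglyMeasurable
      exact (Complex.continuous_ofReal.comp_aestronglyMeasurable h1).mul (Continuous.aestronglyMeasurable (by fun_prop)))
    (by
      filter_upwards [hev] with r hr
      filter_upwards [hne] with s hs hmem
      rw [norm_mul, hnorm, mul_one, Complex.norm_real]
      exact kvK_bound r hr.1 hr.2 s (hs hmem))
    ((kvK_int 1 zero_le_one le_rfl).abs.add intervalIntegrable_const)
    (by
      filter_upwards [hne] with s hs hmem
      have hc : ContinuousAt (fun r : ℝ => (kvK r s : ℂ) * Complex.exp (-Complex.I * k * s)) 1 := by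
        refine ContinuousAt.mul ?_ continuousAt_const
        refine Complex.continuous_ofReal.continuousAt.comp ?_
        unfold kvK
        refine ContinuousAt.log (by fun_prop) ?_
        rw [norm_ne_zero_iff, sub_ne_zero]
        simpa using (hs hmem).symm
      exact hc.tendsto.mono_left nhdsWithin_le_nhds)
  have h' : Filter.Tendsto (fun r : ℝ => ((-(π * r ^ k.natAbs / k.natAbs) : ℝ) : ℂ)) (nhdsWithin (1:ℝ) (Set.Iio 1))
      (nhds ((-(π * 1 ^ k.natAbs / k.natAbs) : ℝ) : ℂ)) := by
    have hc : Continuous (fun r : ℝ => ((-(π * r ^ k.natAbs / k.natAbs) : ℝ) : ℂ)) := by fun_prop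
    exact hc.continuousAt.tendsto.mono_left nhdsWithin_le_nhds
  refine tendsto_nhds_unique h (h'.congr' ?_)
  filter_upwards [hev] with r hr
  exact (kvK_coeff_lt r hr.1 hr.2 k).symm

lemma kvK_per (r s : ℝ) : kvK r (s + 2 * π) = kvK r s := by
  unfold kvK
  congr 4
  push_cast
  rw [add_mul, Complex.exp_add, Complex.exp_two_pi_mul_I, mul_one]

lemma kv_conv_char (L ρ : ℝ → ℝ) (hL : IntervalIntegrable L volume 0 (2 * π)) (hρ : Continuous ρ)
    (hper : Function.Periodic ρ (2 * π)) :
    (∀ η, ρ η + (1 / (2 * π)) * ∫ s in (0:ℝ)..(2 * π), L s * ρ (η - s) = 0) ↔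
    ∀ k : ℤ, (1 + (1 / (2 * π) : ℂ) * ∫ s in (0:ℝ)..(2 * π), (L s : ℂ) * Complex.exp (-Complex.I * k * s)) *
      ((1 / (2 * π) : ℂ) * ∫ η in (0:ℝ)..(2 * π), (ρ η : ℂ) * Complex.exp (-Complex.I * k * η)) = 0 := by
  have hpi := Real.two_pi_pos
  have hpiC : (2 * π : ℂ) ≠ 0 := by exact_mod_cast hpi.ne'
  set F : ℝ → ℝ := fun η => ρ η + (1 / (2 * π)) * ∫ s in (0:ℝ)..(2 * π), L s * ρ (η - s) with hF
  obtain ⟨M, hM⟩ : ∃ M, ∀ x, |ρ x| ≤ M := by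
    obtain ⟨M, hM⟩ := (isCompact_Icc (a := (0:ℝ)) (b := 2 * π)).exists_bound_of_continuousOn hρ.continuousOn
    refine ⟨M, fun x => ?_⟩
    obtain ⟨y, hy, hxy⟩ := hper.exists_mem_Ico₀ hpi x
    rw [hxy]; exact hM y ⟨hy.1, hy.2.le⟩
  have hLi := intervalIntegrable_iff.1 hL
  have hFc : Continuous F := by
    refine hρ.add (continuous_const.mul ?_)
    refine intervalIntegral.continuous_of_dominated_interval (bound := fun s => |L s| * M) ?_ ?_ ?_ ?_
    · intro x
      exact hLi.aestronglyMeasurable.mul (Continuous.aestronglyMeasurable (by fun_prop))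
    · intro x
      refine Filter.Eventually.of_forall fun s _ => ?_
      rw [norm_mul, Real.norm_eq_abs, Real.norm_eq_abs]
      exact mul_le_mul_of_nonneg_left (hM _) (abs_nonneg _)
    · exact hL.abs.mul_const M
    · exact Filter.Eventually.of_forall fun s _ => by fun_prop
  have hFper : Function.Periodic F (2 * π) := by
    intro η
    simp only [hF]
    rw [hper η]
    congr 3; ext s
    rw [add_sub_right_comm, hper]
  have hexpper : ∀ (k : ℤ) (x : ℝ), Complex.exp (-Complex.I * k * ((x + 2 * π : ℝ) : ℂ)) = Complex.exp (-Complex.I * k * x) := by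
    intro k x
    have : -Complex.I * k * ((x + 2 * π : ℝ) : ℂ) = -Complex.I * k * x + ((-k : ℤ) : ℂ) * (2 * π * Complex.I) := by
      push_cast; ring
    rw [this, Complex.exp_add, Complex.exp_int_mul_two_pi_mul_I, mul_one]
  have hcoef : ∀ k : ℤ, (1 / (2 * π) : ℂ) * ∫ η in (0:ℝ)..(2 * π), (F η : ℂ) * Complex.exp (-Complex.I * k * η) =
      (1 + (1 / (2 * π) : ℂ) * ∫ s in (0:ℝ)..(2 * π), (L s : ℂ) * Complex.exp (-Complex.I * k * s)) *
      ((1 / (2 * π) : ℂ) * ∫ η in (0:ℝ)..(2 * π), (ρ η : ℂ) * Complex.exp (-Complex.I * k * η)) := by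
    intro k
    have hshift : ∀ s : ℝ, ∫ η in (0:ℝ)..(2 * π), (ρ (η - s) : ℂ) * Complex.exp (-Complex.I * k * ((η - s : ℝ) : ℂ)) =
        ∫ η in (0:ℝ)..(2 * π), (ρ η : ℂ) * Complex.exp (-Complex.I * k * η) := by
      intro s
      rw [intervalIntegral.integral_comp_sub_right (fun η : ℝ => (ρ η : ℂ) * Complex.exp (-Complex.I * k * (η : ℂ))) s]
      have hp : Function.Periodic (fun η : ℝ => (ρ η : ℂ) * Complex.exp (-Complex.I * k * (η : ℂ))) (2 * π) := by
        intro η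
        simp only
        rw [hper, hexpper]
      have := hp.intervalIntegral_add_eq (0 - s) 0
      rw [zero_add] at this
      rw [← this]; congr 1; ring
    have hsw : ∫ η in (0:ℝ)..(2 * π), (∫ s in (0:ℝ)..(2 * π), (L s : ℂ) * (ρ (η - s) : ℂ)) * Complex.exp (-Complex.I * k * η)
        = (∫ s in (0:ℝ)..(2 * π), (L s : ℂ) * Complex.exp (-Complex.I * k * s)) *
          ∫ η in (0:ℝ)..(2 * π), (ρ η : ℂ) * Complex.exp (-Complex.I * k * η) := by
      have e1 : ∀ η : ℝ, (∫ s in (0:ℝ)..(2 * π), (L s : ℂ) * (ρ (η - s) : ℂ)) * Complex.exp (-Complex.I * k * η) =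
          ∫ s in (0:ℝ)..(2 * π), ((L s : ℂ) * Complex.exp (-Complex.I * k * s)) *
            ((ρ (η - s) : ℂ) * Complex.exp (-Complex.I * k * ((η - s : ℝ) : ℂ))) := by
        intro η
        rw [← intervalIntegral.integral_mul_const]
        congr 1; ext s
        have : Complex.exp (-Complex.I * k * η) = Complex.exp (-Complex.I * k * s) * Complex.exp (-Complex.I * k * ((η - s : ℝ) : ℂ)) := by
          rw [← Complex.exp_add]; congr 1; push_cast; ring
        rw [this]; ring
      simp_rw [e1]
      simp only [intervalIntegral.integral_of_le hpi.le]
      rw [integral_integral_swap]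
      · simp_rw [integral_const_mul]
        simp only [← intervalIntegral.integral_of_le hpi.le]
        simp_rw [hshift]
        rw [intervalIntegral.integral_mul_const]
      · have hLi' : Integrable (fun s : ℝ => (L s : ℂ) * Complex.exp (-Complex.I * k * s)) (volume.restrict (Set.Ioc 0 (2 * π))) := by
          rw [Set.uIoc_of_le hpi.le] at hLi
          refine Integrable.mul_bdd (c := 1) (hLi.ofReal (𝕜 := ℂ)) (Continuous.aestronglyMeasurable (by fun_prop)) ?_
          refine Filter.Eventually.of_forall fun s => ?_
          have : -Complex.I * k * s = ((-(k * s) : ℝ) : ℂ) * Complex.I := by push_cast; ring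
          rw [this, Complex.norm_exp_ofReal_mul_I]
        have h2 := hLi'.comp_snd (volume.restrict (Set.Ioc 0 (2 * π)))
        refine Integrable.mul_bdd (c := M) h2 (Continuous.aestronglyMeasurable (by fun_prop)) ?_
        refine Filter.Eventually.of_forall fun p => ?_
        have : -Complex.I * k * ((p.1 - p.2 : ℝ) : ℂ) = ((-(k * (p.1 - p.2)) : ℝ) : ℂ) * Complex.I := by push_cast; ring
        rw [norm_mul, this, Complex.norm_exp_ofReal_mul_I, mul_one, Complex.norm_real]
        exact hM _
    have hFC : ∀ η, (F η : ℂ) = (ρ η : ℂ) + (1 / (2 * π) : ℂ) * ∫ s in (0:ℝ)..(2 * π), (L s : ℂ) * (ρ (η - s) : ℂ) := by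
      intro η
      simp only [hF]
      push_cast [← intervalIntegral.integral_ofReal]
      rfl
    have hIc : Continuous fun η => (1 / (2 * π) : ℂ) * ∫ s in (0:ℝ)..(2 * π), (L s : ℂ) * (ρ (η - s) : ℂ) := by
      have : (fun η => (1 / (2 * π) : ℂ) * ∫ s in (0:ℝ)..(2 * π), (L s : ℂ) * (ρ (η - s) : ℂ)) = fun η => (F η : ℂ) - (ρ η : ℂ) := by
        ext η; rw [hFC]; ring
      rw [this]; fun_prop
    simp_rw [hFC, add_mul]
    rw [intervalIntegral.integral_add (by apply Continuous.intervalIntegrable; fun_prop) (by apply Continuous.intervalIntegrable; fun_prop)]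
    simp_rw [mul_assoc]
    rw [intervalIntegral.integral_const_mul]
    simp_rw [mul_assoc] at hsw
    rw [hsw]; ring
  constructor
  · intro h k
    rw [← hcoef]
    have : ∀ η, F η = 0 := h
    simp [this]
  · intro h
    haveI : Fact (0 < 2 * π) := ⟨hpi⟩
    have hFperC : Function.Periodic (fun η => (F η : ℂ)) (2 * π) := fun η => by simp only; rw [hFper]
    let G : C(AddCircle (2 * π), ℂ) := ⟨hFperC.lift, by
      have : Continuous fun η => (F η : ℂ) := by fun_prop
      exact continuous_coinduced_dom.2 this⟩
    have hG : ∀ η : ℝ, G (η : AddCircle (2 * π)) = F η := fun η => rfl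
    have hG0 : ∀ k, fourierCoeff G k = 0 := by
      intro k
      rw [fourierCoeff_eq_intervalIntegral _ _ 0, zero_add]
      have e : ∀ x : ℝ, fourier (-k) (x : AddCircle (2 * π)) • G (x : AddCircle (2 * π)) = (F x : ℂ) * Complex.exp (-Complex.I * k * x) := by
        intro x
        rw [hG, fourier_coe_apply, smul_eq_mul, mul_comm]
        congr 2
        push_cast
        field_simp
      simp_rw [e]
      have h1 := hcoef k
      rw [h k] at h1
      have h2 := (mul_eq_zero.1 h1).resolve_left (by simp [Real.pi_ne_zero])
      rw [h2]; simp
    intro η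
    have hs := has_pointwise_sum_fourier_series_of_summable (f := G) (by simp_rw [funext hG0]; exact summable_zero) (η : AddCircle (2 * π))
    simp only [hG0, zero_smul, hG] at hs
    have := hs.unique hasSum_zero
    exact_mod_cast this

lemma kv_norm_sq (r θ : ℝ) : ‖1 - (r:ℂ) * Complex.exp (θ * Complex.I)‖ ^ 2 = 1 - 2 * r * cos θ + r ^ 2 := by
  rw [← Complex.normSq_eq_norm_sq, Complex.normSq_apply]
  simp only [Complex.sub_re, Complex.sub_im, Complex.one_re, Complex.one_im, Complex.re_ofReal_mul, Complex.im_ofReal_mul,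
    Complex.exp_ofReal_mul_I_re, Complex.exp_ofReal_mul_I_im]
  have := Real.sin_sq_add_cos_sq θ
  linear_combination r ^ 2 * this

lemma kv_kernel_norm (t q : ℝ) (ht : 0 < t) (hq : q = (1 - t) / (1 + t)) (η η' : ℝ) :
    ‖kvγ t η - kvγ t η'‖ = (1 + t) / 2 * ‖1 - ((1:ℝ):ℂ) * Complex.exp ((η - η' : ℝ) * Complex.I)‖ *
      ‖1 - (q:ℂ) * Complex.exp ((η + η' : ℝ) * Complex.I)‖ := by
  rw [← abs_of_nonneg (norm_nonneg (kvγ t η - kvγ t η')), ← abs_of_nonneg (a := (1 + t) / 2 * _ * _) (by positivity), ← sq_eq_sq_iff_abs_eq_abs,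
    mul_pow, mul_pow, kv_norm_sq, kv_norm_sq, kvγ, kvγ, pt_sub, pt_norm, Real.sq_sqrt (by positivity)]
  obtain ⟨a, b, h1, h2⟩ : ∃ a b : ℝ, η = a + b ∧ η' = a - b := ⟨(η + η') / 2, (η - η') / 2, by ring, by ring⟩
  have e1 : η - η' = 2 * b := by rw [h1, h2]; ring
  have e2 : η + η' = 2 * a := by rw [h1, h2]; ring
  rw [e1, e2, h1, h2, Real.cos_add, Real.cos_sub, Real.sin_add, Real.sin_sub, Real.cos_two_mul, Real.cos_two_mul]
  have hb := Real.cos_sq' b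
  have ha := Real.cos_sq' a
  have hq' : q * (1 + t) = 1 - t := by rw [hq]; field_simp
  have e3 : ((1 + t) / 2) ^ 2 * (1 - 2 * 1 * (2 * cos b ^ 2 - 1) + 1 ^ 2) * (1 - 2 * q * (2 * cos a ^ 2 - 1) + q ^ 2)
     = (1 - cos b ^ 2) * ((1 + t) ^ 2 - 2 * (q * (1 + t)) * (1 + t) * (2 * cos a ^ 2 - 1) + (q * (1 + t)) ^ 2) := by ring
  rw [e3, hq', ha, hb]
  have ha2 : cos a ^ 2 = 1 - sin a ^ 2 := ha
  ring_nf
  rw [ha2]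
  ring

lemma kv_kernel_log (t q : ℝ) (ht : 0 < t) (ht1 : t < 1) (hq : q = (1 - t) / (1 + t)) (η η' : ℝ)
    (h : Complex.exp ((η - η' : ℝ) * Complex.I) ≠ 1) :
    Real.log ‖kvγ t η - kvγ t η'‖ = -Real.log (1 + q) + kvK 1 (η - η') + kvK q (η + η') := by
  have hq0 : 0 ≤ q := by rw [hq]; apply div_nonneg <;> linarith
  have hq1 : q < 1 := by rw [hq, div_lt_one (by linarith)]; linarith
  have n1 : ‖1 - ((1:ℝ):ℂ) * Complex.exp ((η - η' : ℝ) * Complex.I)‖ ≠ 0 := by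
    rw [norm_ne_zero_iff, sub_ne_zero, Complex.ofReal_one, one_mul]; exact h.symm
  have n2 : ‖1 - (q:ℂ) * Complex.exp ((η + η' : ℝ) * Complex.I)‖ ≠ 0 := by
    rw [norm_ne_zero_iff, sub_ne_zero]
    intro hs
    have := congrArg norm hs
    rw [norm_mul, Complex.norm_exp_ofReal_mul_I, mul_one, Complex.norm_real, Real.norm_of_nonneg hq0, norm_one] at this
    linarith
  have hi : (1 + t) / 2 = (1 + q)⁻¹ := by rw [hq]; field_simp; ring
  rw [kv_kernel_norm t q ht hq, Real.log_mul (by positivity) n2, Real.log_mul (by positivity) n1, hi, Real.log_inv]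
  rfl

lemma kv_exp_ae (η : ℝ) : ∀ᵐ η' : ℝ, Complex.exp ((η - η' : ℝ) * Complex.I) ≠ 1 := by
  rw [ae_iff]
  refine Set.Countable.measure_zero (Set.Countable.mono (s₂ := Set.range fun n : ℤ => η - n * (2 * π)) ?_ (Set.countable_range _)) _
  intro x hx
  simp only [ne_eq, not_not, Set.mem_setOf_eq] at hx
  obtain ⟨n, hn⟩ := Complex.exp_eq_one_iff.1 hx
  have hn' : η - x = n * (2 * π) := by
    have h2 : ((η - x : ℝ):ℂ) * Complex.I = ((n * (2 * π) : ℝ) : ℂ) * Complex.I := by rw [hn]; push_cast; ring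
    exact_mod_cast mul_right_cancel₀ Complex.I_ne_zero h2
  exact ⟨n, by simp only; linarith⟩

lemma kv_shift (f : ℝ → ℝ) (hf : Function.Periodic f (2 * π)) (a : ℝ) :
    ∫ s in a..(a + 2 * π), f s = ∫ s in (0:ℝ)..(2 * π), f s := by
  have := hf.intervalIntegral_add_eq a 0
  rwa [zero_add] at this

lemma kv_reduce (c q : ℝ) (hq0 : 0 ≤ q) (hq1 : q ≤ 1) (ρ : ℝ → ℝ) (hρ : Continuous ρ)
    (hper : Function.Periodic ρ (2 * π)) (heven : ∀ η, ρ (-η) = ρ η) (η : ℝ) :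
    ∫ x in (0:ℝ)..(2 * π), (c + kvK 1 (η - x) + kvK q (η + x)) * ρ x =
      ∫ s in (0:ℝ)..(2 * π), (c + kvK 1 s + kvK q s) * ρ (η - s) := by
  have hpi := Real.two_pi_pos
  have hI : ∀ r, 0 ≤ r → r ≤ 1 → ∀ a b, IntervalIntegrable (kvK r) volume a b := by
    intro r h0 h1 a b
    have hp : Function.Periodic (kvK r) (2 * π) := kvK_per r
    exact hp.intervalIntegrable₀ hpi.ne' (kvK_int r h0 h1) a b
  have i1 : IntervalIntegrable (fun x => kvK 1 (η - x) * ρ x) volume 0 (2 * π) := by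
    refine IntervalIntegrable.mul_continuousOn ?_ hρ.continuousOn
    have := (hI 1 zero_le_one le_rfl (η - 0) (η - 2 * π)).comp_sub_left η
    simpa using this
  have i2 : IntervalIntegrable (fun x => kvK q (η + x) * ρ x) volume 0 (2 * π) := by
    refine IntervalIntegrable.mul_continuousOn ?_ hρ.continuousOn
    have := (hI q hq0 hq1 (η + 0) (η + 2 * π)).comp_add_left η
    simpa using this
  have i3 : IntervalIntegrable (fun x => kvK 1 x * ρ (η - x)) volume 0 (2 * π) :=
    (hI 1 zero_le_one le_rfl _ _).mul_continuousOn (Continuous.continuousOn (by fun_prop))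
  have i4 : IntervalIntegrable (fun x => kvK q x * ρ (η - x)) volume 0 (2 * π) :=
    (hI q hq0 hq1 _ _).mul_continuousOn (Continuous.continuousOn (by fun_prop))
  have j1 : IntervalIntegrable (fun x => c * ρ x) volume 0 (2 * π) := Continuous.intervalIntegrable (by fun_prop) _ _
  have j2 : IntervalIntegrable (fun x => c * ρ (η - x)) volume 0 (2 * π) := Continuous.intervalIntegrable (by fun_prop) _ _
  simp_rw [add_mul]
  rw [intervalIntegral.integral_add (j1.add i1) i2, intervalIntegral.integral_add j1 i1,
    intervalIntegral.integral_add (j2.add i3) i4, intervalIntegral.integral_add j2 i3]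
  have pr : ∀ x, ρ (η - (x + 2 * π)) = ρ (η - x) := by
    intro x; rw [← hper (η - (x + 2 * π))]; congr 1; ring
  have k0 : ∫ x in (0:ℝ)..(2 * π), c * ρ x = ∫ x in (0:ℝ)..(2 * π), c * ρ (η - x) := by
    rw [← kv_shift (fun x => c * ρ (η - x)) (fun x => by simp only; rw [pr]) (η - 2 * π)]
    rw [intervalIntegral.integral_comp_sub_left (fun x => c * ρ x) η]
    congr 1 <;> ring
  have k1 : ∫ x in (0:ℝ)..(2 * π), kvK 1 (η - x) * ρ x = ∫ x in (0:ℝ)..(2 * π), kvK 1 x * ρ (η - x) := by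
    rw [← kv_shift (fun x => kvK 1 x * ρ (η - x)) (fun x => by simp only; rw [pr, kvK_per]) (η - 2 * π)]
    have := intervalIntegral.integral_comp_sub_left (fun x => kvK 1 x * ρ (η - x)) (a := 0) (b := 2 * π) η
    simp only [sub_sub_cancel] at this
    rw [this]
    congr 1 <;> ring
  have k2 : ∫ x in (0:ℝ)..(2 * π), kvK q (η + x) * ρ x = ∫ x in (0:ℝ)..(2 * π), kvK q x * ρ (η - x) := by
    rw [← kv_shift (fun x => kvK q x * ρ (η - x)) (fun x => by simp only; rw [pr, kvK_per]) η]
    have := intervalIntegral.integral_comp_add_left (fun x => kvK q x * ρ (η - x)) (a := 0) (b := 2 * π) η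
    rw [add_zero] at this
    rw [← this]
    congr 1; ext x
    rw [sub_add_cancel_left, heven]
  rw [k0, k1, k2]

lemma kv_Lcoeff (C c q : ℝ) (hq0 : 0 ≤ q) (hq1 : q ≤ 1) (k : ℤ) :
    ∫ s in (0:ℝ)..(2 * π), ((C * (c + kvK 1 s + kvK q s) : ℝ) : ℂ) * Complex.exp (-Complex.I * k * s) =
      ((C * ((if k = 0 then 2 * π * c else 0) - π * (1 + q ^ k.natAbs) / k.natAbs) : ℝ) : ℂ) := by
  have hI : ∀ r, 0 ≤ r → r ≤ 1 → IntervalIntegrable (fun s : ℝ => (kvK r s : ℂ) * Complex.exp (-Complex.I * k * s)) volume 0 (2 * π) := by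
    intro r h0 h1
    refine IntervalIntegrable.mul_continuousOn ?_ (Continuous.continuousOn (by fun_prop))
    exact ⟨(kvK_int r h0 h1).1.ofReal, (kvK_int r h0 h1).2.ofReal⟩
  have hc : IntervalIntegrable (fun s : ℝ => (c : ℂ) * Complex.exp (-Complex.I * k * s)) volume 0 (2 * π) :=
    Continuous.intervalIntegrable (by fun_prop) _ _
  have e : ∀ s : ℝ, ((C * (c + kvK 1 s + kvK q s) : ℝ) : ℂ) * Complex.exp (-Complex.I * k * s) =
      (C : ℂ) * (((c : ℂ) * Complex.exp (-Complex.I * k * s) + (kvK 1 s : ℂ) * Complex.exp (-Complex.I * k * s)) +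
        (kvK q s : ℂ) * Complex.exp (-Complex.I * k * s)) := by
    intro s; push_cast; ring
  simp_rw [e]
  rw [intervalIntegral.integral_const_mul, intervalIntegral.integral_add (hc.add (hI 1 zero_le_one le_rfl)) (hI q hq0 hq1),
    intervalIntegral.integral_add hc (hI 1 zero_le_one le_rfl), kvK_coeff 1 zero_le_one le_rfl, kvK_coeff q hq0 hq1,
    intervalIntegral.integral_const_mul]
  have h := kv_exp_int (-k)
  have e2 : ∀ s : ℝ, Complex.I * ((-k : ℤ) : ℂ) * s = -Complex.I * k * s := by intro s; push_cast; ring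
  simp_rw [e2] at h
  rw [h]
  by_cases hk : k = 0
  · subst hk; simp; left; ring
  · rw [if_neg hk, if_neg (by omega)]; push_cast; ring

lemma kv_tanh (ξ : ℝ) (hξ : 0 < ξ) : Real.exp (-(2 * ξ)) = (1 - Real.tanh ξ) / (1 + Real.tanh ξ) ∧
    (1 + Real.tanh ξ) ^ 2 / Real.tanh ξ = 2 * Real.exp (2 * ξ) / Real.sinh (2 * ξ) := by
  have hs := Real.sinh_pos_iff.2 hξ
  have hcp := Real.cosh_pos ξ
  have he : Real.exp (2 * ξ) = Real.exp ξ ^ 2 := by rw [← Real.exp_nat_mul]; norm_num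
  have hsum := Real.cosh_add_sinh ξ
  have hdif := Real.cosh_sub_sinh ξ
  constructor
  · have h1 : Real.exp (-(2 * ξ)) = Real.exp (-ξ) / Real.exp ξ := by rw [← Real.exp_sub]; congr 1; ring
    rw [h1, ← hsum, ← hdif, Real.tanh_eq_sinh_div_cosh]; field_simp
  · rw [he, ← hsum, Real.sinh_two_mul, Real.tanh_eq_sinh_div_cosh]; field_simp
/-- **Nondegeneracy on Kirchhoff stream functions, I** (Fourier
characterization of the kernel of the linearized operator). -/
theorem kirchhoff_nondegeneracy_fourier_characterization
    (ξ : ℝ) (hξ : 0 < ξ) (φ : Pt → ℝ)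
    (hcont : ContinuousOn φ (frontier (Eell ξ)))
    (hsym : ∀ x ∈ frontier (Eell ξ),
      φ x = φ (pt (x 0) (-(x 1))) ∧ φ x = φ (pt (-(x 0)) (-(x 1))))
    (ρ : ℝ → ℝ) (hρ : ∀ η : ℝ, ρ η = φ (pt (Real.cos η) (Real.tanh ξ * Real.sin η)))
    (ρhat : ℤ → ℂ)
    (hρhat : ∀ k : ℤ, ρhat k = (1 / (2 * π) : ℂ) *
      ∫ η in (0 : ℝ)..(2 * π), (ρ η : ℂ) * Complex.exp (-Complex.I * k * η)) :
    (∀ x ∈ frontier (Eell ξ),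
        φ x + ∫ y in frontier (Eell ξ),
          (1 / (2 * π)) * Real.log ‖x - y‖ * (φ y / ‖gradient (Ψell ξ) y‖) ∂μH[1] = 0) ↔
      (((Real.sinh (2 * ξ) - 2 * Real.exp (2 * ξ) * Real.log (1 + Real.exp (-(2 * ξ))) : ℝ) : ℂ) *
          ρhat 0 = 0 ∧
        ∀ k : ℤ, k ≠ 0 →
          ((|(k : ℝ)| * Real.sinh (2 * ξ) -
              Real.exp (2 * ξ) * (1 + Real.exp (-(2 * ξ * |(k : ℝ)|))) : ℝ) : ℂ) *
            ρhat k = 0) := by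
  have ht := tanh_pos' ξ hξ
  have ht1 := tanh_lt_one' ξ
  obtain ⟨hq, hC⟩ := kv_tanh ξ hξ
  have hfr := kv_frontier ξ hξ
  have hcurve := kv_curve_integral ξ hξ
  have hgrad := kv_gradnorm ξ hξ
  set t := Real.tanh ξ with htd
  set q := Real.exp (-(2 * ξ)) with hqd
  have hq0 : 0 ≤ q := (Real.exp_pos _).le
  have hq1 : q ≤ 1 := Real.exp_le_one_iff.2 (by linarith)
  have hpi := Real.two_pi_pos
  have hpi0 := Real.pi_pos
  have hS : 0 < Real.sinh (2 * ξ) := Real.sinh_pos_iff.2 (by linarith)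
  set C := 2 * Real.exp (2 * ξ) / Real.sinh (2 * ξ) with hCd
  have hmem : ∀ η, kvγ t η ∈ frontier (Eell ξ) := by
    intro η; rw [hfr]; exact kvγ_mem t ht η
  have hρ' : ∀ η, ρ η = φ (kvγ t η) := hρ
  have hρc : Continuous ρ := by
    have : ρ = fun η => φ (kvγ t η) := funext hρ'
    rw [this]
    exact hcont.comp_continuous (kvγ_cont t) hmem
  have hper : Function.Periodic ρ (2 * π) := by
    intro η; rw [hρ, hρ, Real.cos_add_two_pi, Real.sin_add_two_pi]
  have heven : ∀ η, ρ (-η) = ρ η := by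
    intro η
    rw [hρ' η, (hsym _ (hmem η)).1, hρ]
    simp [kvγ, pt_zero, pt_one]
  set L : ℝ → ℝ := fun s => C * (-Real.log (1 + q) + kvK 1 s + kvK q s) with hL
  have hLi : IntervalIntegrable L volume 0 (2 * π) :=
    ((intervalIntegrable_const.add (kvK_int 1 zero_le_one le_rfl)).add (kvK_int q hq0 hq1)).const_mul C
  have hkey : ∀ η, φ (kvγ t η) + ∫ y in frontier (Eell ξ),
      (1 / (2 * π)) * Real.log ‖kvγ t η - y‖ * (φ y / ‖gradient (Ψell ξ) y‖) ∂μH[1] =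
      ρ η + (1 / (2 * π)) * ∫ s in (0:ℝ)..(2 * π), L s * ρ (η - s) := by
    intro η
    rw [hcurve, ← hρ']
    congr 1
    have e1 : ∀ s, L s * ρ (η - s) = C * ((-Real.log (1 + q) + kvK 1 s + kvK q s) * ρ (η - s)) := by
      intro s; simp only [hL]; ring
    simp_rw [e1]
    rw [intervalIntegral.integral_const_mul, ← kv_reduce _ q hq0 hq1 ρ hρc hper heven η,
      ← intervalIntegral.integral_const_mul, ← intervalIntegral.integral_const_mul]
    apply intervalIntegral.integral_congr_ae
    filter_upwards [kv_exp_ae η] with x hx _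
    rw [kv_kernel_log t q ht ht1 hq η x hx, ← hρ']
    have hg := hgrad x
    change ‖gradient (Ψell ξ) (kvγ t x)‖ = t / (1 + t) ^ 2 * kvs t x at hg
    rw [hg, ← hC]
    have := kvs_pos t ht x
    field_simp
  have hiff : (∀ x ∈ frontier (Eell ξ), φ x + ∫ y in frontier (Eell ξ),
      (1 / (2 * π)) * Real.log ‖x - y‖ * (φ y / ‖gradient (Ψell ξ) y‖) ∂μH[1] = 0) ↔
      ∀ η, ρ η + (1 / (2 * π)) * ∫ s in (0:ℝ)..(2 * π), L s * ρ (η - s) = 0 := by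
    constructor
    · intro h η
      rw [← hkey]; exact h _ (hmem η)
    · intro h x hx
      rw [hfr] at hx
      obtain ⟨η, _, rfl⟩ := kvγ_surj t ht x hx
      rw [hkey]; exact h η
  rw [hiff, kv_conv_char L ρ hLi hρc hper]
  have hco : ∀ k : ℤ, ((1 + (1 / (2 * π) : ℂ) * ∫ s in (0:ℝ)..(2 * π), (L s : ℂ) * Complex.exp (-Complex.I * k * s)) *
      ((1 / (2 * π) : ℂ) * ∫ η in (0:ℝ)..(2 * π), (ρ η : ℂ) * Complex.exp (-Complex.I * k * η)) = 0) ↔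
      (((1 + C * ((if k = 0 then -Real.log (1 + q) else 0) - (1 + q ^ k.natAbs) / (2 * k.natAbs)) : ℝ) : ℂ) * ρhat k = 0) := by
    intro k
    rw [← hρhat k, kv_Lcoeff C _ q hq0 hq1 k]
    have : (1 + (1 / (2 * π) : ℂ) * ((C * ((if k = 0 then 2 * π * (-Real.log (1 + q)) else 0) - π * (1 + q ^ k.natAbs) / k.natAbs) : ℝ) : ℂ))
        = ((1 + C * ((if k = 0 then -Real.log (1 + q) else 0) - (1 + q ^ k.natAbs) / (2 * k.natAbs)) : ℝ) : ℂ) := by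
      have h2 : ((1 / (2 * π) : ℂ)) = ((1 / (2 * π) : ℝ) : ℂ) := by push_cast; rfl
      rw [h2, ← Complex.ofReal_mul, ← Complex.ofReal_one, ← Complex.ofReal_add]
      congr 2
      by_cases hk : k = 0
      · subst hk; simp; field_simp
      · have : (k.natAbs : ℝ) ≠ 0 := by simpa using hk
        rw [if_neg hk, if_neg hk]; field_simp; ring
    rw [this]
  simp_rw [hco]
  have hzero : ∀ (a b : ℝ) (z : ℂ), (a = 0 ↔ b = 0) → (((a : ℝ) : ℂ) * z = 0 ↔ ((b : ℝ) : ℂ) * z = 0) := by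
    intro a b z h
    rw [mul_eq_zero, mul_eq_zero, Complex.ofReal_eq_zero, Complex.ofReal_eq_zero, h]
  have h0 : ((1 + C * ((if (0:ℤ) = 0 then -Real.log (1 + q) else 0) - (1 + q ^ (0:ℤ).natAbs) / (2 * ((0:ℤ).natAbs : ℕ))) : ℝ) = 0) ↔
      Real.sinh (2 * ξ) - 2 * Real.exp (2 * ξ) * Real.log (1 + q) = 0 := by
    have : Real.sinh (2 * ξ) - 2 * Real.exp (2 * ξ) * Real.log (1 + q) = Real.sinh (2 * ξ) *
      (1 + C * ((if (0:ℤ) = 0 then -Real.log (1 + q) else 0) - (1 + q ^ (0:ℤ).natAbs) / (2 * ((0:ℤ).natAbs : ℕ)))) := by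
      simp [hCd]; field_simp; ring
    rw [this, mul_eq_zero, or_iff_right hS.ne']
  have h1 : ∀ k : ℤ, k ≠ 0 → (((1 + C * ((if k = 0 then -Real.log (1 + q) else 0) - (1 + q ^ k.natAbs) / (2 * k.natAbs)) : ℝ) = 0) ↔
      |(k : ℝ)| * Real.sinh (2 * ξ) - Real.exp (2 * ξ) * (1 + Real.exp (-(2 * ξ * |(k : ℝ)|))) = 0) := by
    intro k hk
    have hkp : 0 < |(k : ℝ)| := abs_pos.2 (by exact_mod_cast hk)
    have hka : (k.natAbs : ℝ) = |(k : ℝ)| := by rw [Nat.cast_natAbs, Int.cast_abs]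
    have hqp : q ^ k.natAbs = Real.exp (-(2 * ξ * |(k : ℝ)|)) := by
      rw [hqd, ← Real.exp_nat_mul, hka]; congr 1; ring
    have : |(k : ℝ)| * Real.sinh (2 * ξ) - Real.exp (2 * ξ) * (1 + Real.exp (-(2 * ξ * |(k : ℝ)|))) =
      |(k : ℝ)| * Real.sinh (2 * ξ) * (1 + C * ((if k = 0 then -Real.log (1 + q) else 0) - (1 + q ^ k.natAbs) / (2 * k.natAbs))) := by
      rw [if_neg hk, hqp, hka, hCd]; field_simp; ring
    rw [this, mul_eq_zero, or_iff_right (by positivity)]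
  constructor
  · intro h
    exact ⟨(hzero _ _ _ h0).1 (h 0), fun k hk => (hzero _ _ _ (h1 k hk)).1 (h k)⟩
  · rintro ⟨ha, hb⟩ k
    by_cases hk : k = 0
    · subst hk; exact (hzero _ _ _ h0).2 ha
    · exact (hzero _ _ _ (h1 k hk)).2 (hb k hk)
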